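/- Lipschitz estimate for the operator W: for l ≥ 1, α ∈ (0,1), ℓ₁, ℓ₂, v₁, v₂ ∈ C^{l,α} with ‖∇ℓᵢ‖_{l−1,α} ≤ L and ‖vᵢ‖_{l,α} ≤ V, there exists C = C(l, α, L) such that ‖W(ℓ₁,v₁) − W(ℓ₂,v₂)‖_{l,α} ≤ C(V ‖ℓ₁ − ℓ₂‖_{l,α} + ‖v₁ − v₂‖_{l,α}). -/

import Mathlib

noncomputable section

open MeasureTheory Real Set

abbrev V3 : Type := Fin 3 → ℝ

def pd (f : V3 → ℝ) (j : Fin 3) (x : V3) : ℝ := fderiv ℝ f x (Pi.single j 1)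

def Per {E : Type*} (f : V3 → E) : Prop :=
  ∀ (x : V3) (k : Fin 3 → ℤ), f (x + fun i => (k i : ℝ)) = f x

def TorusMap (g : V3 → V3) : Prop :=
  ∀ (x : V3) (k : Fin 3 → ℤ), g (x + fun i => (k i : ℝ)) = g x + fun i => (k i : ℝ)

def Box : Set V3 := Set.univ.pi fun _ => Set.Ioc (0:ℝ) 1

def l2inner (u v : V3 → V3) : ℝ := ∫ x in Box, ∑ i, u x i * v x i

def dirD (u v : V3 → V3) : V3 → V3 := fun x i => ∑ j, u x j * pd (fun y => v y i) j x

def lie (u v : V3 → V3) : V3 → V3 := fun x => dirD u v x - dirD v u x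

def jmT (σ w : V3 → V3) : V3 → V3 := fun x i => ∑ j, pd (fun y => σ y j) i x * w x j

def gradf (f : V3 → ℝ) : V3 → V3 := fun x i => pd f i x

def divg (u : V3 → V3) (x : V3) : ℝ := ∑ j, pd (fun y => u y j) j x

def curl (u : V3 → V3) : V3 → V3 := fun x =>
  ![pd (fun y => u y 2) 1 x - pd (fun y => u y 1) 2 x,
    pd (fun y => u y 0) 2 x - pd (fun y => u y 2) 0 x,
    pd (fun y => u y 1) 0 x - pd (fun y => u y 0) 1 x]

def cross (a b : V3) : V3 :=
  ![a 1 * b 2 - a 2 * b 1, a 2 * b 0 - a 0 * b 2, a 0 * b 1 - a 1 * b 0]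

def supN {E : Type*} [NormedAddCommGroup E] (f : V3 → E) : ℝ :=
  sSup (Set.range fun x => ‖f x‖)

def hSemi {E : Type*} [NormedAddCommGroup E] (α : ℝ) (f : V3 → E) : ℝ :=
  sSup {r | ∃ x y : V3, x ≠ y ∧ r = ‖f x - f y‖ / ‖x - y‖ ^ α}

def cNorm {E : Type*} [NormedAddCommGroup E] [NormedSpace ℝ E] (l : ℕ) (f : V3 → E) : ℝ :=
  ∑ m ∈ Finset.range (l + 1), supN (fun x => iteratedFDeriv ℝ m f x)

def holNorm {E : Type*} [NormedAddCommGroup E] [NormedSpace ℝ E] (l : ℕ) (α : ℝ) (f : V3 → E) : ℝ :=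
  cNorm l f + hSemi α (fun x => iteratedFDeriv ℝ l f x)

def MemHol {E : Type*} [NormedAddCommGroup E] [NormedSpace ℝ E] (l : ℕ) (α : ℝ) (f : V3 → E) : Prop :=
  ContDiff ℝ l f ∧ ∃ C, ∀ x y, ‖iteratedFDeriv ℝ l f x - iteratedFDeriv ℝ l f y‖ ≤ C * ‖x - y‖ ^ α

def jac (g : V3 → V3) : V3 → (V3 →L[ℝ] V3) := fun x => fderiv ℝ g x

def c1Norm (f : V3 → V3) : ℝ := supN f + supN (jac f)

def c1αNorm (α : ℝ) (f : V3 → V3) : ℝ := supN f + supN (jac f) + hSemi α (jac f)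

def IsFlow (u Y : ℝ → V3 → V3) (T : ℝ) : Prop :=
  (∀ x, Y 0 x = x) ∧ ∀ x, ∀ t ∈ Set.Icc 0 T, HasDerivAt (fun s => Y s x) (u t (Y t x)) t

def weberField (l v : V3 → V3) : V3 → V3 := fun x => v x + jmT l v x

def IsLeray (f w : V3 → V3) : Prop :=
  Per w ∧ ContDiff ℝ 1 w ∧ (∀ x, divg w x = 0) ∧
  ∃ p : V3 → ℝ, Per p ∧ Differentiable ℝ p ∧ ∀ x, f x = w x + gradf p x

def Inv3 (g h : V3 → V3) : Prop := (∀ x, h (g x) = x) ∧ ∀ x, g (h x) = x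

def pullb (g ginv u : V3 → V3) : V3 → V3 := fun x => fderiv ℝ ginv (g x) (u (g x))

def weber (ginv u₀ : V3 → V3) : V3 → V3 := jmT ginv (fun y => u₀ (ginv y))

def InU (l : ℕ) (α τ U : ℝ) (u₀ : V3 → V3) (u : ℝ → V3 → V3) : Prop :=
  (Continuous fun p : ℝ × V3 => u p.1 p.2) ∧ (∀ x, u 0 x = u₀ x) ∧
  ∀ t ∈ Set.Icc 0 τ, MemHol (l+1) α (u t) ∧ Per (u t) ∧ (∀ x, divg (u t) x = 0) ∧
    holNorm (l+1) α (u t) ≤ U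

def PhiRel (φ ψ : ℝ → V3 → V3) (u₀ : V3 → V3) (τ : ℝ) (u uhat : ℝ → V3 → V3) : Prop :=
  ∃ Y Yinv : ℝ → V3 → V3,
    IsFlow (fun t => pullb (φ t) (ψ t) (u t)) Y τ ∧
    (∀ t ∈ Set.Icc 0 τ, Inv3 (Y t) (Yinv t)) ∧
    ∀ t ∈ Set.Icc 0 τ, IsLeray (weber (fun x => Yinv t (ψ t x)) u₀) (uhat t)

/-!
In the curl of `(∇ℓ)ᵀ v` the second derivatives of `ℓ` cancel, so the curl of a Weber field involves
only first derivatives of `ℓ` and `v`, and so does the curl of `P[(I + ∇ℓ)ᵀ v]`, which differs from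
the field by a gradient. The Laplacian of a divergence-free `w` is the divergence of its curl, so
Schauder's estimate gives `w` back the derivative lost in `∇ℓ`. The difference of two Weber fields
is again a sum of fields of this kind, linear in `ℓ₁ - ℓ₂` or in `v₁ - v₂`.

Schauder's estimate comes from averages `A r` against a radial kernel of width `r`, for which
`∂ᵣ (A r)` is an average of the Laplacian with weight `r`; two derivatives fall on the kernel and
leave `rᵅ⁻¹`, integrable at `0`. The cancellation in the curl is only weak when `ℓ` is `C¹`: one
mollifies, and the Hölder bounds pass to uniform limits.
-/

section

open Filter Topology
open scoped ContDiff

universe u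

section HolderBall

variable {X E F G : Type*} [NormedAddCommGroup X] [NormedSpace ℝ X]
  [NormedAddCommGroup E] [NormedSpace ℝ E] [NormedAddCommGroup F] [NormedSpace ℝ F]
  [NormedAddCommGroup G] [NormedSpace ℝ G] {n : ℕ} {α K K' : ℝ} {f g : X → E}

/-- `f` is `C^n`, and all its derivatives of order at most `n` are bounded by `K` and are
`α`-Hölder with constant `K`. Such balls replace the `C^{n,α}` norm, whose suprema are meaningless
when infinite; on bounded functions the two are comparable. -/
structure HolderBound (n : ℕ) (α K : ℝ) (f : X → E) : Prop where
  contDiff : ContDiff ℝ n f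
  norm_le : ∀ i ≤ n, ∀ x, ‖iteratedFDeriv ℝ i f x‖ ≤ K
  norm_sub_le : ∀ i ≤ n, ∀ x y,
    ‖iteratedFDeriv ℝ i f x - iteratedFDeriv ℝ i f y‖ ≤ K * ‖x - y‖ ^ α

lemma norm_iteratedFDeriv_zero_sub (f : X → E) (x y : X) :
    ‖iteratedFDeriv ℝ 0 f x - iteratedFDeriv ℝ 0 f y‖ = ‖f x - f y‖ := by
  rw [iteratedFDeriv_zero_eq_comp, Function.comp_apply, Function.comp_apply, ← map_sub,
    LinearIsometryEquiv.norm_map]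

lemma norm_iteratedFDeriv_succ_sub (f : X → E) (i : ℕ) (x y : X) :
    ‖iteratedFDeriv ℝ (i + 1) f x - iteratedFDeriv ℝ (i + 1) f y‖ =
      ‖iteratedFDeriv ℝ i (fderiv ℝ f) x - iteratedFDeriv ℝ i (fderiv ℝ f) y‖ := by
  simp only [iteratedFDeriv_succ_eq_comp_right, Function.comp_apply, ← dist_eq_norm]
  exact LinearIsometryEquiv.dist_map _ _ _

namespace HolderBound

lemma nonneg (hf : HolderBound n α K f) : 0 ≤ K :=
  (norm_nonneg _).trans (hf.norm_le 0 (Nat.zero_le _) 0)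

lemma mono (hf : HolderBound n α K f) (hK : K ≤ K') : HolderBound n α K' f where
  contDiff := hf.contDiff
  norm_le i hi x := (hf.norm_le i hi x).trans hK
  norm_sub_le i hi x y := (hf.norm_sub_le i hi x y).trans (by gcongr)

lemma of_le {m : ℕ} (hf : HolderBound n α K f) (hm : m ≤ n) : HolderBound m α K f where
  contDiff := hf.contDiff.of_le (by exact_mod_cast hm)
  norm_le i hi := hf.norm_le i (hi.trans hm)
  norm_sub_le i hi := hf.norm_sub_le i (hi.trans hm)

lemma zero_iff : HolderBound 0 α K f ↔
    Continuous f ∧ (∀ x, ‖f x‖ ≤ K) ∧ ∀ x y, ‖f x - f y‖ ≤ K * ‖x - y‖ ^ α := by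
  constructor
  · intro hf
    refine ⟨hf.contDiff.continuous, fun x => ?_, fun x y => ?_⟩
    · simpa using hf.norm_le 0 le_rfl x
    · simpa only [norm_iteratedFDeriv_zero_sub] using hf.norm_sub_le 0 le_rfl x y
  · rintro ⟨hcont, hbound, hholder⟩
    refine ⟨by simpa using hcont, fun i hi x => ?_, fun i hi x y => ?_⟩ <;>
      obtain rfl := Nat.le_zero.1 hi
    · simpa using hbound x
    · rw [norm_iteratedFDeriv_zero_sub]
      exact hholder x y

lemma succ_iff : HolderBound (n + 1) α K f ↔
    Differentiable ℝ f ∧ HolderBound 0 α K f ∧ HolderBound n α K (fderiv ℝ f) := by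
  constructor
  · intro hf
    have hcd : ContDiff ℝ ((n : ℕ∞ω) + 1) f := by exact_mod_cast hf.contDiff
    refine ⟨hcd.differentiable (by simp), hf.of_le (Nat.zero_le _),
      hcd.fderiv_right le_rfl, fun i hi x => ?_, fun i hi x y => ?_⟩
    · rw [norm_iteratedFDeriv_fderiv]
      exact hf.norm_le (i + 1) (by omega) x
    · rw [← norm_iteratedFDeriv_succ_sub]
      exact hf.norm_sub_le (i + 1) (by omega) x y
  · rintro ⟨hdiff, hf, hf'⟩
    refine ⟨?_, fun i hi x => ?_, fun i hi x y => ?_⟩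
    · exact_mod_cast contDiff_succ_iff_fderiv.2 ⟨hdiff, by simp, hf'.contDiff⟩
    · cases i with
      | zero => exact hf.norm_le 0 le_rfl x
      | succ i =>
        rw [← norm_iteratedFDeriv_fderiv]
        exact hf'.norm_le i (by omega) x
    · cases i with
      | zero => exact hf.norm_sub_le 0 le_rfl x y
      | succ i =>
        rw [norm_iteratedFDeriv_succ_sub]
        exact hf'.norm_sub_le i (by omega) x y

lemma bound (hf : HolderBound n α K f) (x : X) : ‖f x‖ ≤ K :=
  (zero_iff.1 (hf.of_le (Nat.zero_le _))).2.1 x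

lemma holder (hf : HolderBound n α K f) (x y : X) : ‖f x - f y‖ ≤ K * ‖x - y‖ ^ α :=
  (zero_iff.1 (hf.of_le (Nat.zero_le _))).2.2 x y

protected lemma fderiv (hf : HolderBound (n + 1) α K f) : HolderBound n α K (fderiv ℝ f) :=
  (succ_iff.1 hf).2.2

lemma zero : HolderBound n α 0 (fun _ : X => (0 : E)) where
  contDiff := contDiff_const
  norm_le i _ x := by simp [iteratedFDeriv_fun_zero]
  norm_sub_le i _ x y := by simp [iteratedFDeriv_fun_zero]

lemma add (hf : HolderBound n α K f) (hg : HolderBound n α K' g) :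
    HolderBound n α (K + K') (fun x => f x + g x) := by
  have key : ∀ i ≤ n, ∀ x, iteratedFDeriv ℝ i (fun x => f x + g x) x =
      iteratedFDeriv ℝ i f x + iteratedFDeriv ℝ i g x := fun i hi x =>
    iteratedFDeriv_add_apply (hf.of_le hi).contDiff.contDiffAt (hg.of_le hi).contDiff.contDiffAt
  refine ⟨hf.contDiff.add hg.contDiff, fun i hi x => ?_, fun i hi x y => ?_⟩
  · rw [key i hi]
    exact norm_add_le_of_le (hf.norm_le i hi x) (hg.norm_le i hi x)
  · rw [key i hi, key i hi, add_sub_add_comm, add_mul]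
    exact norm_add_le_of_le (hf.norm_sub_le i hi x y) (hg.norm_sub_le i hi x y)

lemma sum {κ : Type*} (s : Finset κ) {K : κ → ℝ} {f : κ → X → E}
    (hf : ∀ j ∈ s, HolderBound n α (K j) (f j)) :
    HolderBound n α (∑ j ∈ s, K j) (fun x => ∑ j ∈ s, f j x) := by
  induction s using Finset.cons_induction with
  | empty => simpa using zero
  | cons j s hj ih =>
    simp only [Finset.sum_cons]
    exact (hf j (Finset.mem_cons_self j s)).add
      (ih fun k hk => hf k (Finset.mem_cons_of_mem hk))

lemma clm_apply (hf : HolderBound n α K f) (T : E →L[ℝ] F) :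
    HolderBound n α (‖T‖ * K) (fun x => T (f x)) := by
  have key : ∀ i ≤ n, ∀ x, iteratedFDeriv ℝ i (fun x => T (f x)) x =
      T.compContinuousMultilinearMap (iteratedFDeriv ℝ i f x) := fun i hi x =>
    T.iteratedFDeriv_comp_left hf.contDiff.contDiffAt (by exact_mod_cast hi)
  refine ⟨T.contDiff.comp hf.contDiff, fun i hi x => ?_, fun i hi x y => ?_⟩
  · rw [key i hi]
    exact (T.norm_compContinuousMultilinearMap_le _).trans (by gcongr; exact hf.norm_le i hi x)
  · have hsub : T.compContinuousMultilinearMap (iteratedFDeriv ℝ i f x) -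
        T.compContinuousMultilinearMap (iteratedFDeriv ℝ i f y) =
        T.compContinuousMultilinearMap (iteratedFDeriv ℝ i f x - iteratedFDeriv ℝ i f y) := by
      ext m
      simp
    rw [key i hi, key i hi, hsub, mul_assoc]
    exact (T.norm_compContinuousMultilinearMap_le _).trans
      (by gcongr; exact hf.norm_sub_le i hi x y)

lemma sub (hf : HolderBound n α K f) (hg : HolderBound n α K' g) :
    HolderBound n α (K + K') (fun x => f x - g x) := by
  have hneg : HolderBound n α K' (fun x => -g x) :=
    (hg.clm_apply (-ContinuousLinearMap.id ℝ E)).mono <| by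
      rw [norm_neg]
      exact mul_le_of_le_one_left hg.nonneg ContinuousLinearMap.norm_id_le
  simpa only [sub_eq_add_neg] using hf.add hneg

lemma apply_const {T : X → E →L[ℝ] F} (hT : HolderBound n α K T) (v : E) :
    HolderBound n α (‖v‖ * K) (fun x => T x v) :=
  (hT.clm_apply (ContinuousLinearMap.apply ℝ F v)).mono <| by
    gcongr
    · exact hT.nonneg
    · exact ContinuousLinearMap.opNorm_le_bound _ (norm_nonneg v) fun T => by
        simpa [mul_comm] using T.le_opNorm v

lemma bilinear_zero (B : E →L[ℝ] F →L[ℝ] G) {g : X → F} (hf : HolderBound 0 α K f)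
    (hg : HolderBound 0 α K' g) :
    HolderBound 0 α (2 * (‖B‖ * (K * K'))) (fun x => B (f x) (g x)) := by
  have hK := hf.nonneg
  have hK' := hg.nonneg
  refine zero_iff.2 ⟨(B.continuous.comp hf.contDiff.continuous).clm_apply hg.contDiff.continuous,
    fun x => ?_, fun x y => ?_⟩
  · calc ‖B (f x) (g x)‖ ≤ ‖B‖ * ‖f x‖ * ‖g x‖ := B.le_opNorm₂ _ _
      _ ≤ ‖B‖ * K * K' := by gcongr; exacts [hf.bound x, hg.bound x]
      _ ≤ 2 * (‖B‖ * (K * K')) := by linarith [show 0 ≤ ‖B‖ * (K * K') by positivity]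
  · have split : B (f x) (g x) - B (f y) (g y) = B (f x - f y) (g x) + B (f y) (g x - g y) := by
      simp only [map_sub, sub_apply, sub_add_sub_cancel]
    calc ‖B (f x) (g x) - B (f y) (g y)‖
        ≤ ‖B‖ * ‖f x - f y‖ * ‖g x‖ + ‖B‖ * ‖f y‖ * ‖g x - g y‖ := by
          rw [split]
          exact norm_add_le_of_le (B.le_opNorm₂ _ _) (B.le_opNorm₂ _ _)
      _ ≤ ‖B‖ * (K * ‖x - y‖ ^ α) * K' + ‖B‖ * K * (K' * ‖x - y‖ ^ α) := by
          gcongr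
          exacts [hf.holder x y, hg.bound x, hf.bound y, hg.holder x y]
      _ = 2 * (‖B‖ * (K * K')) * ‖x - y‖ ^ α := by ring

end HolderBound

end HolderBall

lemma HolderBound.bilinear {X : Type u} [NormedAddCommGroup X] [NormedSpace ℝ X] {α K K' : ℝ}
    {n : ℕ} {E F G : Type u} [NormedAddCommGroup E] [NormedSpace ℝ E] [NormedAddCommGroup F]
    [NormedSpace ℝ F] [NormedAddCommGroup G] [NormedSpace ℝ G] (B : E →L[ℝ] F →L[ℝ] G)
    {f : X → E} {g : X → F} (hf : HolderBound n α K f) (hg : HolderBound n α K' g) :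
    HolderBound n α (2 ^ (n + 1) * (‖B‖ * (K * K'))) (fun x => B (f x) (g x)) := by
  induction n generalizing E F G with
  | zero => simpa using hf.bilinear_zero B hg
  | succ n ih =>
    have hK := hf.nonneg
    have hK' := hg.nonneg
    have hdf := (HolderBound.succ_iff.1 hf).1
    have hdg := (HolderBound.succ_iff.1 hg).1
    have product_rule : fderiv ℝ (fun x => B (f x) (g x)) = fun x =>
        B.precompR X (f x) (fderiv ℝ g x) + B.precompL X (fderiv ℝ f x) (g x) :=
      funext fun x => B.fderiv_of_bilinear (hdf x) (hdg x)
    refine HolderBound.succ_iff.2 ⟨fun x => (B.isBoundedBilinearMap.differentiable _).comp x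
      ((hdf x).prodMk (hdg x)), ?_, ?_⟩
    · refine ((hf.of_le (Nat.zero_le _)).bilinear_zero B (hg.of_le (Nat.zero_le _))).mono ?_
      gcongr
      exact le_self_pow₀ one_le_two (Nat.succ_ne_zero _)
    · rw [product_rule]
      refine ((ih (B.precompR X) (hf.of_le n.le_succ) hg.fderiv).add
        (ih (B.precompL X) hf.fderiv (hg.of_le n.le_succ))).mono ?_
      calc _ ≤ 2 ^ (n + 1) * (‖B‖ * (K * K')) + 2 ^ (n + 1) * (‖B‖ * (K * K')) := by
            gcongr
            exacts [B.norm_precompR_le X, B.norm_precompL_le X]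
        _ = 2 ^ (n + 1 + 1) * (‖B‖ * (K * K')) := by ring

lemma HolderBound.mul {X : Type} [NormedAddCommGroup X] [NormedSpace ℝ X] {α K K' : ℝ} {n : ℕ}
    {f g : X → ℝ} (hf : HolderBound n α K f) (hg : HolderBound n α K' g) :
    HolderBound n α (2 ^ (n + 1) * (K * K')) (fun x => f x * g x) := by
  simpa using hf.bilinear (ContinuousLinearMap.mul ℝ ℝ) hg

lemma norm_sub_le_rpow_of_lipschitz {X E : Type*} [SeminormedAddCommGroup X]
    [SeminormedAddCommGroup E] {α K : ℝ} {f : X → E} (hα : 0 ≤ α) (hα' : α ≤ 1)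
    (hbound : ∀ x, ‖f x‖ ≤ K) (hlip : ∀ x y, ‖f x - f y‖ ≤ K * ‖x - y‖) (x y : X) :
    ‖f x - f y‖ ≤ 2 * K * ‖x - y‖ ^ α := by
  have hK : 0 ≤ K := (norm_nonneg _).trans (hbound x)
  rcases le_total ‖x - y‖ 1 with hxy | hxy
  · calc ‖f x - f y‖ ≤ K * ‖x - y‖ := hlip x y
      _ ≤ K * ‖x - y‖ ^ α := by
          gcongr
          simpa using Real.rpow_le_rpow_of_exponent_ge' (norm_nonneg (x - y)) hxy hα hα'
      _ ≤ 2 * K * ‖x - y‖ ^ α := by gcongr; linarith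
  · calc ‖f x - f y‖ ≤ 2 * K := by
          rw [two_mul]
          exact norm_sub_le_of_le (hbound x) (hbound y)
      _ ≤ 2 * K * ‖x - y‖ ^ α := le_mul_of_one_le_right (by positivity) (Real.one_le_rpow hxy hα)

section Interpolation

variable {X E : Type*} [NormedAddCommGroup X] [NormedSpace ℝ X]
  [NormedAddCommGroup E] [NormedSpace ℝ E] {n : ℕ} {α K ε : ℝ} {f : X → E}

lemma HolderBound.succ_of_fderiv (hα : 0 ≤ α) (hα' : α ≤ 1) (hf : Differentiable ℝ f)
    (hbound : ∀ x, ‖f x‖ ≤ K) (hf' : HolderBound n α K (fderiv ℝ f)) :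
    HolderBound (n + 1) α (2 * K) f := by
  have hK : K ≤ 2 * K := by linarith [hf'.nonneg]
  refine succ_iff.2 ⟨hf, zero_iff.2 ⟨hf.continuous, fun x => (hbound x).trans hK,
    norm_sub_le_rpow_of_lipschitz hα hα' hbound fun x y => ?_⟩, hf'.mono hK⟩
  exact Convex.norm_image_sub_le_of_norm_fderiv_le (𝕜 := ℝ) (fun z _ => hf z)
    (fun z _ => hf'.bound z) convex_univ (mem_univ y) (mem_univ x)

lemma norm_fderiv_le_of_bound_of_holder (hα : 0 ≤ α) (hK : 0 ≤ K) (hf : Differentiable ℝ f)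
    (hbound : ∀ x, ‖f x‖ ≤ ε)
    (hholder : ∀ x y, ‖fderiv ℝ f x - fderiv ℝ f y‖ ≤ K * ‖x - y‖ ^ α) {t : ℝ} (ht : 0 < t)
    (x : X) : ‖fderiv ℝ f x‖ ≤ 2 * ε / t + K * t ^ α := by
  have hε : 0 ≤ ε := (norm_nonneg _).trans (hbound x)
  refine ContinuousLinearMap.opNorm_le_of_unit_norm (by positivity) fun v hv => ?_
  have htv : ‖t • v‖ = t := by rw [norm_smul, hv, mul_one, norm_of_nonneg ht.le]
  have taylor : ‖f (x + t • v) - f x - fderiv ℝ f x (t • v)‖ ≤ K * t ^ α * t := by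
    have := Convex.norm_image_sub_le_of_norm_hasFDerivWithin_le' (φ := fderiv ℝ f x)
      (s := Metric.closedBall x t) (x := x) (y := x + t • v) (C := K * t ^ α)
      (fun y _ => (hf y).hasFDerivAt.hasFDerivWithinAt) (fun y hy => ?_) (convex_closedBall x t)
      (Metric.mem_closedBall_self ht.le) (by simp [htv])
    · simpa [htv] using this
    · refine (hholder y x).trans ?_
      gcongr
      exact mem_closedBall_iff_norm.1 hy
  have scaled : t * ‖fderiv ℝ f x v‖ ≤ 2 * ε + K * t ^ α * t := by
    calc t * ‖fderiv ℝ f x v‖ = ‖fderiv ℝ f x (t • v)‖ := by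
          rw [map_smul, norm_smul, norm_of_nonneg ht.le]
      _ = ‖(f (x + t • v) - f x) - (f (x + t • v) - f x - fderiv ℝ f x (t • v))‖ := by
          rw [sub_sub_cancel]
      _ ≤ (ε + ε) + K * t ^ α * t :=
          norm_sub_le_of_le (norm_sub_le_of_le (hbound _) (hbound x)) taylor
      _ = 2 * ε + K * t ^ α * t := by ring
  calc ‖fderiv ℝ f x v‖ = t * ‖fderiv ℝ f x v‖ / t := (mul_div_cancel_left₀ _ ht.ne').symm
    _ ≤ (2 * ε + K * t ^ α * t) / t := by gcongr
    _ = 2 * ε / t + K * t ^ α := by field_simp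

lemma uniformCauchySeqOn_fderiv {ι : Type*} {l : Filter ι} {f : ι → X → E} (hα : 0 < α)
    (hK : 0 ≤ K) (hf : ∀ i, Differentiable ℝ (f i))
    (hholder : ∀ i x y, ‖fderiv ℝ (f i) x - fderiv ℝ (f i) y‖ ≤ K * ‖x - y‖ ^ α)
    (hcauchy : UniformCauchySeqOn f l univ) :
    UniformCauchySeqOn (fun i => fderiv ℝ (f i)) l univ := by
  intro u hu
  obtain ⟨ε, hε, hεu⟩ := Metric.mem_uniformity_dist.1 hu
  have small_scale : Tendsto (fun t : ℝ => (K + K) * t ^ α) (𝓝[>] 0) (𝓝 0) := by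
    have := (Real.continuousAt_rpow_const 0 α (Or.inr hα.le)).tendsto.const_mul (K + K)
    rw [Real.zero_rpow hα.ne', mul_zero] at this
    exact this.mono_left nhdsWithin_le_nhds
  obtain ⟨t, htε, ht⟩ := ((small_scale.eventually_lt_const (half_pos hε)).and
    self_mem_nhdsWithin).exists
  have ht : 0 < t := ht
  filter_upwards [hcauchy _ (Metric.dist_mem_uniformity (show 0 < ε * t / 4 by positivity))]
    with m hm x _
  have fderiv_diff : ∀ y, fderiv ℝ (f m.1 - f m.2) y =
      fderiv ℝ (f m.1) y - fderiv ℝ (f m.2) y := fun y => fderiv_sub (hf _ y) (hf _ y)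
  have interpolate := norm_fderiv_le_of_bound_of_holder (ε := ε * t / 4) hα.le (add_nonneg hK hK)
    ((hf m.1).sub (hf m.2)) (fun y => by simpa [dist_eq_norm] using (hm y (mem_univ y)).le)
    (fun y z => by
      simp only [fderiv_diff, sub_sub_sub_comm, add_mul]
      exact norm_sub_le_of_le (hholder m.1 y z) (hholder m.2 y z)) ht x
  apply hεu
  rw [dist_eq_norm, ← fderiv_diff]
  calc _ ≤ 2 * (ε * t / 4) / t + (K + K) * t ^ α := interpolate
    _ < ε / 2 + ε / 2 := by
        rw [show 2 * (ε * t / 4) / t = ε / 2 by field_simp; norm_num]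
        gcongr
    _ = ε := add_halves ε

lemma HolderBound.zero_of_tendstoUniformly {ι : Type*} {l : Filter ι} [l.NeBot] {f : ι → X → E}
    {g : X → E} (hf : ∀ i, HolderBound 0 α K (f i)) (hlim : TendstoUniformly f g l) :
    HolderBound 0 α K g :=
  zero_iff.2 ⟨hlim.continuous (Frequently.of_forall fun i => (hf i).contDiff.continuous),
    fun x => le_of_tendsto (hlim.tendsto_at x).norm (Eventually.of_forall fun i => (hf i).bound x),
    fun x y => le_of_tendsto ((hlim.tendsto_at x).sub (hlim.tendsto_at y)).norm
      (Eventually.of_forall fun i => (hf i).holder x y)⟩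

end Interpolation

lemma HolderBound.of_tendstoUniformly {X : Type u} [NormedAddCommGroup X] [NormedSpace ℝ X]
    {ι : Type*} {l : Filter ι} [l.NeBot] {E : Type u} [NormedAddCommGroup E] [NormedSpace ℝ E]
    [CompleteSpace E] {n : ℕ} {α K : ℝ} (hα : 0 < α) {f : ι → X → E} {g : X → E}
    (hf : ∀ i, HolderBound n α K (f i)) (hlim : TendstoUniformly f g l) :
    HolderBound n α K g := by
  induction n generalizing E with
  | zero => exact HolderBound.zero_of_tendstoUniformly hf hlim
  | succ n ih =>
    have hdiff : ∀ i, Differentiable ℝ (f i) := fun i => (HolderBound.succ_iff.1 (hf i)).1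
    obtain ⟨i₀⟩ : Nonempty ι := l.nonempty_of_neBot
    have hcauchy := uniformCauchySeqOn_fderiv hα (hf i₀).nonneg hdiff
      (fun i => (hf i).fderiv.holder) (tendstoUniformlyOn_univ.2 hlim).uniformCauchySeqOn
    choose g' hg' using fun x => CompleteSpace.complete (hcauchy.cauchy_map (mem_univ x))
    have hlim' : TendstoUniformly (fun i => fderiv ℝ (f i)) g' l := by
      rw [← tendstoUniformlyOn_univ]
      exact hcauchy.tendstoUniformlyOn_of_tendsto fun x _ => hg' x
    have hderiv : ∀ x, HasFDerivAt g (g' x) x := hasFDerivAt_of_tendstoUniformly hlim'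
      (fun i x => (hdiff i x).hasFDerivAt) hlim.tendsto_at
    rw [← funext fun x => (hderiv x).fderiv] at hlim'
    exact HolderBound.succ_iff.2 ⟨fun x => (hderiv x).differentiableAt,
      HolderBound.zero_of_tendstoUniformly (fun i => (hf i).of_le (Nat.zero_le _)) hlim,
      ih (fun i => (hf i).fderiv) hlim'⟩

section DirectionalDerivative

variable {X E F : Type*} [NormedAddCommGroup X] [NormedSpace ℝ X]
  [NormedAddCommGroup E] [NormedSpace ℝ E] [NormedAddCommGroup F] [NormedSpace ℝ F]
  {m n : ℕ∞ω} {f g : X → E}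

/-- The derivative of `f` in the direction `v`; with `v = Pi.single k 1` it is the partial
derivative `pd f k`, but for vector-valued `f` in any dimension. -/
def dirDeriv (v : X) (f : X → E) : X → E := fun x => fderiv ℝ f x v

lemma contDiff_dirDeriv (hf : ContDiff ℝ n f) (hmn : m + 1 ≤ n) (v : X) :
    ContDiff ℝ m (dirDeriv v f) :=
  (hf.fderiv_right hmn).clm_apply contDiff_const

lemma continuous_dirDeriv (hf : ContDiff ℝ 1 f) (v : X) : Continuous (dirDeriv v f) :=
  (contDiff_dirDeriv (m := 0) hf (by simp) v).continuous

lemma hasCompactSupport_dirDeriv (hf : HasCompactSupport f) (v : X) :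
    HasCompactSupport (dirDeriv v f) :=
  (hf.fderiv (𝕜 := ℝ)).comp_left (g := fun T : X →L[ℝ] E => T v) (by simp)

lemma dirDeriv_clm_apply (hf : Differentiable ℝ f) (T : E →L[ℝ] F) (v : X) :
    dirDeriv v (fun x => T (f x)) = fun x => T (dirDeriv v f x) :=
  funext fun x => by
    have hderiv : HasFDerivAt (fun y => T (f y)) (T.comp (fderiv ℝ f x)) x :=
      T.hasFDerivAt.comp x (hf x).hasFDerivAt
    rw [dirDeriv, hderiv.fderiv]
    rfl

lemma dirDeriv_sub (hf : Differentiable ℝ f) (hg : Differentiable ℝ g) (v : X) :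
    dirDeriv v (fun x => f x - g x) = fun x => dirDeriv v f x - dirDeriv v g x :=
  funext fun x => by rw [dirDeriv, fderiv_fun_sub (hf x) (hg x), sub_apply]; rfl

lemma dirDeriv_mul {a b : X → ℝ} (ha : Differentiable ℝ a) (hb : Differentiable ℝ b) (v : X) :
    dirDeriv v (fun x => a x * b x) = fun x => dirDeriv v a x * b x + a x * dirDeriv v b x :=
  funext fun x => by
    rw [dirDeriv, fderiv_fun_mul (ha x) (hb x)]
    simp [dirDeriv, mul_comm, add_comm]

lemma dirDeriv_sum {κ : Type*} {s : Finset κ} {f : κ → X → E}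
    (hf : ∀ j ∈ s, Differentiable ℝ (f j)) (v : X) :
    dirDeriv v (fun x => ∑ j ∈ s, f j x) = fun x => ∑ j ∈ s, dirDeriv v (f j) x :=
  funext fun x => by rw [dirDeriv, fderiv_fun_sum fun j hj => hf j hj x, sum_apply]; rfl

lemma dirDeriv_fderiv (hf : ContDiff ℝ 2 f) (v : X) :
    dirDeriv v (fderiv ℝ f) = fderiv ℝ (dirDeriv v f) := by
  ext x w
  have hdiff : Differentiable ℝ (fderiv ℝ f) :=
    (hf.fderiv_right (m := 1) (by norm_num)).differentiable (by simp)
  have hsymm : IsSymmSndFDerivAt ℝ f x := hf.contDiffAt.isSymmSndFDerivAt (by simp)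
  have hcomm := congrFun
    (dirDeriv_clm_apply hdiff (ContinuousLinearMap.apply ℝ E v) w) x
  exact (hsymm v w).trans hcomm.symm

lemma dirDeriv_comm (hf : ContDiff ℝ 2 f) (v w : X) :
    dirDeriv v (dirDeriv w f) = dirDeriv w (dirDeriv v f) := by
  funext x
  rw [dirDeriv, ← dirDeriv_fderiv hf]
  exact (congrFun (dirDeriv_clm_apply ((hf.fderiv_right (m := 1) (by norm_num)).differentiable
    (by simp)) (ContinuousLinearMap.apply ℝ E v) w) x).symm

end DirectionalDerivative

local notation "∂[" k "]" => dirDeriv (Pi.single k (1 : ℝ))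

section CoordinateSpace

variable {ι : Type*} [Fintype ι] [DecidableEq ι] {E : Type*} [NormedAddCommGroup E]
  [NormedSpace ℝ E]

lemma clm_pi_apply_eq_sum (T : (ι → ℝ) →L[ℝ] E) (x : ι → ℝ) :
    T x = ∑ k, x k • T (Pi.single k 1) := by
  conv_lhs => rw [pi_eq_sum_univ' x, map_sum]
  simp only [map_smul]

lemma clm_pi_norm_le (T : (ι → ℝ) →L[ℝ] E) : ‖T‖ ≤ ∑ k, ‖T (Pi.single k 1)‖ := by
  refine T.opNorm_le_bound (by positivity) fun x => ?_
  rw [clm_pi_apply_eq_sum T x, Finset.sum_mul]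
  refine norm_sum_le_of_le _ fun k _ => ?_
  rw [norm_smul, mul_comm]
  gcongr
  exact norm_le_pi_norm x k

end CoordinateSpace

section ParametricIntegral

lemma hasFDerivAt_integral_smul_of_hasCompactSupport {P Z E : Type*} [NormedAddCommGroup P]
    [NormedSpace ℝ P] [ProperSpace P] [TopologicalSpace Z] [MeasurableSpace Z]
    [OpensMeasurableSpace Z] {μ : Measure Z} [IsFiniteMeasureOnCompacts μ]
    [NormedAddCommGroup E] [NormedSpace ℝ E] {θ : Z → ℝ} (hθ : Continuous θ)
    (hsupp : HasCompactSupport θ) {F : P → Z → E} {F' : P → Z → P →L[ℝ] E}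
    (hF : ∀ p, Continuous (F p)) (hF' : Continuous (Function.uncurry F'))
    (hderiv : ∀ p z, HasFDerivAt (fun q => F q z) (F' p z) p) (p : P) :
    HasFDerivAt (fun q => ∫ z, θ z • F q z ∂μ) (∫ z, θ z • F' p z ∂μ) p := by
  obtain ⟨M, hM⟩ := ((isCompact_closedBall p 1).prod hsupp).exists_bound_of_continuousOn
    hF'.continuousOn
  have hint : ∀ q, Integrable (fun z => θ z • F q z) μ := fun q =>
    (hθ.smul (hF q)).integrable_of_hasCompactSupport hsupp.smul_right
  have hint' : Integrable (fun z => θ z • F' p z) μ :=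
    (hθ.smul (hF'.comp (Continuous.prodMk_right p))).integrable_of_hasCompactSupport
      hsupp.smul_right
  refine hasFDerivAt_integral_of_dominated_of_fderiv_le (F' := fun q z => θ z • F' q z)
    (bound := fun z => ‖θ z‖ * M) (Metric.closedBall_mem_nhds p one_pos)
    (Eventually.of_forall fun q => (hint q).aestronglyMeasurable) (hint p)
    hint'.aestronglyMeasurable (Eventually.of_forall fun z q hq => ?_)
    ((hθ.integrable_of_hasCompactSupport hsupp).norm.mul_const M)
    (Eventually.of_forall fun z q _ => (hderiv q z).const_smul (θ z))
  by_cases hz : z ∈ tsupport θ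
  · rw [norm_smul]
    gcongr
    exact hM (q, z) ⟨hq, hz⟩
  · simp [image_eq_zero_of_notMem_tsupport hz]

end ParametricIntegral

section ScaledAverage

variable {X E : Type*} [NormedAddCommGroup X] [NormedSpace ℝ X] [MeasureSpace X]
  [NormedAddCommGroup E] [NormedSpace ℝ E]
  {θ : X → ℝ} {f : X → E} {r : ℝ}

/-- The average of `f` around `x` against the kernel `θ` rescaled to width `r`. Writing it with
`f (x - r • z)` keeps it meaningful at `r = 0`, where it is `(∫ θ) • f x`, and for `r < 0`. -/
def scaledAverage (θ : X → ℝ) (r : ℝ) (f : X → E) (x : X) : E := ∫ z, θ z • f (x - r • z)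

lemma scaledAverage_zero [CompleteSpace E] (x : X) :
    scaledAverage θ 0 f x = (∫ z, θ z) • f x := by
  simp only [scaledAverage, zero_smul, sub_zero, integral_smul_const]

variable [BorelSpace X] [IsFiniteMeasureOnCompacts (volume : Measure X)]

lemma integrable_scaledAverage (hθ : Continuous θ) (hsupp : HasCompactSupport θ) (r : ℝ)
    (hf : Continuous f) (x : X) : Integrable (fun z => θ z • f (x - r • z)) :=
  Continuous.integrable_of_hasCompactSupport (by fun_prop) hsupp.smul_right

lemma continuous_scaledAverage (hθ : Continuous θ) (hsupp : HasCompactSupport θ) (r : ℝ)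
    (hf : Continuous f) : Continuous (scaledAverage θ r f) := by
  rw [← continuousOn_univ]
  refine continuousOn_integral_of_compact_support hsupp (by fun_prop) fun x z _ hz => ?_
  rw [image_eq_zero_of_notMem_tsupport hz, zero_smul]

lemma norm_scaledAverage_le (hθ : Continuous θ) (hsupp : HasCompactSupport θ) {M : ℝ}
    (hf : ∀ x, ‖f x‖ ≤ M) (r : ℝ) (x : X) : ‖scaledAverage θ r f x‖ ≤ (∫ z, |θ z|) * M := by
  rw [← integral_mul_const]
  refine norm_integral_le_of_norm_le
    ((hθ.integrable_of_hasCompactSupport hsupp).abs.mul_const M) (Eventually.of_forall fun z => ?_)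
  rw [norm_smul, Real.norm_eq_abs]
  gcongr
  exact hf _

lemma scaledAverage_sum (hθ : Continuous θ) (hsupp : HasCompactSupport θ) (r : ℝ) {κ : Type*}
    (s : Finset κ) {f : κ → X → E} (hf : ∀ j ∈ s, Continuous (f j)) (x : X) :
    scaledAverage θ r (fun y => ∑ j ∈ s, f j y) x = ∑ j ∈ s, scaledAverage θ r (f j) x := by
  simp only [scaledAverage, Finset.smul_sum]
  exact integral_finsetSum s fun j hj => integrable_scaledAverage hθ hsupp r (hf j hj) x

lemma scaledAverage_add (hθ : Continuous θ) (hsupp : HasCompactSupport θ) (r : ℝ) {g : X → E}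
    (hf : Continuous f) (hg : Continuous g) :
    scaledAverage θ r (fun y => f y + g y) =
      fun x => scaledAverage θ r f x + scaledAverage θ r g x := by
  funext x
  simp only [scaledAverage, smul_add]
  exact integral_add (integrable_scaledAverage hθ hsupp r hf x)
    (integrable_scaledAverage hθ hsupp r hg x)

lemma scaledAverage_sub (hθ : Continuous θ) (hsupp : HasCompactSupport θ) (r : ℝ) {g : X → E}
    (hf : Continuous f) (hg : Continuous g) :
    scaledAverage θ r (fun y => f y - g y) =
      fun x => scaledAverage θ r f x - scaledAverage θ r g x := by
  funext x
  simp only [scaledAverage, smul_sub]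
  exact integral_sub (integrable_scaledAverage hθ hsupp r hf x)
    (integrable_scaledAverage hθ hsupp r hg x)

lemma hasDerivAt_scaledAverage (hθ : Continuous θ) (hsupp : HasCompactSupport θ) (r : ℝ)
    (hf : ContDiff ℝ 1 f) (x : X) :
    HasDerivAt (fun s => scaledAverage θ s f x) (-∫ z, θ z • dirDeriv z f (x - r • z)) r := by
  have : Continuous (fderiv ℝ f) := hf.continuous_fderiv (by simp)
  set F' : ℝ → X → ℝ →L[ℝ] E := fun s z =>
    (ContinuousLinearMap.toSpanSingleton ℝ (-dirDeriv z f (x - s • z))) with hF'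
  have hF'cont : Continuous (Function.uncurry F') := by
    refine (ContinuousLinearMap.toSpanSingletonCLE (𝕜 := ℝ) (E := E)).continuous.comp ?_
    simp only [dirDeriv]
    fun_prop
  have h := hasFDerivAt_integral_smul_of_hasCompactSupport (μ := volume)
    (F := fun s z => f (x - s • z)) hθ hsupp (fun s => hf.continuous.comp (by fun_prop)) hF'cont
    (fun s z => ?_) r
  · have hint : Integrable fun z => θ z • F' r z :=
      (hθ.smul (hF'cont.comp (Continuous.prodMk_right r))).integrable_of_hasCompactSupport
        hsupp.smul_right
    have hvalue : (∫ z, θ z • F' r z) 1 = -∫ z, θ z • dirDeriv z f (x - r • z) := by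
      rw [ContinuousLinearMap.integral_apply hint, ← integral_neg]
      simp [hF']
    exact hvalue ▸ h.hasDerivAt
  · have hline : HasDerivAt (fun t : ℝ => x - t • z) (-z) s := by
      simpa using ((hasDerivAt_id s).smul_const z).const_sub x
    have hcomp := (hf.differentiable (by simp) (x - s • z)).hasFDerivAt.comp_hasDerivAt s hline
    rw [map_neg] at hcomp
    exact hcomp.hasFDerivAt

variable [FiniteDimensional ℝ X]

lemma hasFDerivAt_scaledAverage (hθ : Continuous θ) (hsupp : HasCompactSupport θ) (r : ℝ)
    (hf : ContDiff ℝ 1 f) (x : X) :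
    HasFDerivAt (scaledAverage θ r f) (scaledAverage θ r (fderiv ℝ f) x) x := by
  have hf' : Continuous (fderiv ℝ f) := hf.continuous_fderiv (by simp)
  refine hasFDerivAt_integral_smul_of_hasCompactSupport (F := fun y z => f (y - r • z))
    (F' := fun y z => fderiv ℝ f (y - r • z)) hθ hsupp
    (fun y => hf.continuous.comp (by fun_prop)) (hf'.comp (by fun_prop)) (fun y z => ?_) x
  exact (hf.differentiable (by simp) _).hasFDerivAt.comp y ((hasFDerivAt_id y).sub_const _)

lemma contDiff_one_scaledAverage (hθ : Continuous θ) (hsupp : HasCompactSupport θ) (r : ℝ)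
    (hf : ContDiff ℝ 1 f) : ContDiff ℝ 1 (scaledAverage θ r f) := by
  have hderiv := fun x => hasFDerivAt_scaledAverage hθ hsupp r hf x
  refine contDiff_one_iff_fderiv.2 ⟨fun x => (hderiv x).differentiableAt, ?_⟩
  rw [funext fun x => (hderiv x).fderiv]
  exact continuous_scaledAverage hθ hsupp r (hf.continuous_fderiv (by simp))

lemma dirDeriv_scaledAverage (hθ : Continuous θ) (hsupp : HasCompactSupport θ) (r : ℝ)
    (hf : ContDiff ℝ 1 f) (v : X) :
    dirDeriv v (scaledAverage θ r f) = scaledAverage θ r (dirDeriv v f) := by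
  funext x
  rw [dirDeriv, (hasFDerivAt_scaledAverage hθ hsupp r hf x).fderiv, scaledAverage,
    ContinuousLinearMap.integral_apply
      (integrable_scaledAverage hθ hsupp r (hf.continuous_fderiv (by simp)) x)]
  rfl

end ScaledAverage

section IntegrationByParts

variable {X E : Type*} [NormedAddCommGroup X] [NormedSpace ℝ X] [FiniteDimensional ℝ X]
  [MeasureSpace X] [BorelSpace X] [(volume : Measure X).IsAddHaarMeasure]
  [NormedAddCommGroup E] [NormedSpace ℝ E] {θ : X → ℝ} {f : X → E}

lemma integral_dirDeriv_smul (hθ : ContDiff ℝ 1 θ) (hsupp : HasCompactSupport θ)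
    (hf : ContDiff ℝ 1 f) (v : X) :
    ∫ z, dirDeriv v θ z • f z = -∫ z, θ z • dirDeriv v f z := by
  have hparts := integral_bilinear_hasFDerivAt_right_eq_neg_left_of_integrable
    (μ := (volume : Measure X)) (f := θ) (g := f) (v := v) (B := ContinuousLinearMap.lsmul ℝ ℝ)
    (((continuous_dirDeriv hθ v).smul hf.continuous).integrable_of_hasCompactSupport
      (hasCompactSupport_dirDeriv hsupp v).smul_right)
    ((hθ.continuous.smul (continuous_dirDeriv hf v)).integrable_of_hasCompactSupport
      hsupp.smul_right)
    ((hθ.continuous.smul hf.continuous).integrable_of_hasCompactSupport hsupp.smul_right)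
    (fun z _ => (hθ.differentiable (by simp) z).hasFDerivAt)
    (fun z _ => (hf.differentiable (by simp) z).hasFDerivAt)
  exact (neg_eq_iff_eq_neg.2 hparts).symm

lemma integral_dirDeriv_eq_zero (hθ : ContDiff ℝ 1 θ) (hsupp : HasCompactSupport θ) (v : X) :
    ∫ z, dirDeriv v θ z = 0 := by
  simpa [dirDeriv] using
    integral_dirDeriv_smul hθ hsupp (contDiff_const (c := (1 : ℝ))) v

lemma smul_scaledAverage_dirDeriv (hθ : ContDiff ℝ 1 θ) (hsupp : HasCompactSupport θ) (r : ℝ)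
    (hf : ContDiff ℝ 1 f) (v x : X) :
    r • scaledAverage θ r (dirDeriv v f) x = scaledAverage (dirDeriv v θ) r f x := by
  have hscale : ∀ z, dirDeriv v (fun y => f (x - r • y)) z = -(r • dirDeriv v f (x - r • z)) := by
    intro z
    have hderiv : HasFDerivAt (fun y => f (x - r • y))
        ((fderiv ℝ f (x - r • z)).comp (-(r • ContinuousLinearMap.id ℝ X))) z :=
      (hf.differentiable (by simp) _).hasFDerivAt.comp z
        (((hasFDerivAt_id z).const_smul r).const_sub x)
    simp [dirDeriv, hderiv.fderiv]
  have hcomp : ContDiff ℝ 1 fun y => f (x - r • y) := hf.comp (by fun_prop)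
  simp only [scaledAverage]
  rw [integral_dirDeriv_smul hθ hsupp hcomp v, ← integral_smul, ← integral_neg]
  simp only [hscale, smul_neg, neg_neg, smul_comm r]

end IntegrationByParts

section RadialKernel

lemma hasDerivAt_expNegInvGlue (x : ℝ) :
    HasDerivAt expNegInvGlue (x⁻¹ ^ 2 * expNegInvGlue x) x := by
  simpa using expNegInvGlue.hasDerivAt_polynomial_eval_inv_mul 1 x

variable {ι : Type*} [Fintype ι]

lemma one_le_sum_sq_of_notMem_closedBall {z : ι → ℝ} (hz : z ∉ Metric.closedBall 0 1) :
    1 ≤ ∑ i, z i ^ 2 := by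
  rw [mem_closedBall_zero_iff, pi_norm_le_iff_of_nonneg zero_le_one] at hz
  push Not at hz
  obtain ⟨i, hi⟩ := hz
  calc 1 ≤ z i ^ 2 := by rwa [one_le_sq_iff_one_le_abs, ← Real.norm_eq_abs, le_iff_lt_or_eq,
        or_iff_left_of_imp fun h => h ▸ hi]
    _ ≤ ∑ i, z i ^ 2 :=
      Finset.single_le_sum (f := fun i => z i ^ 2) (fun i _ => sq_nonneg _) (Finset.mem_univ i)

lemma hasCompactSupport_comp_one_sub_sum_sq {h : ℝ → ℝ} (hh : ∀ t ≤ 0, h t = 0) :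
    HasCompactSupport fun z : ι → ℝ => h (1 - ∑ i, z i ^ 2) :=
  HasCompactSupport.intro (isCompact_closedBall (0 : ι → ℝ) 1) fun _ hz =>
    hh _ (sub_nonpos.2 (one_le_sum_sq_of_notMem_closedBall hz))

variable [DecidableEq ι]

lemma dirDeriv_comp_one_sub_sum_sq {h : ℝ → ℝ} {h' : ℝ} {z : ι → ℝ}
    (hh : HasDerivAt h h' (1 - ∑ i, z i ^ 2)) (k : ι) :
    ∂[k] (fun y => h (1 - ∑ i, y i ^ 2)) z = -(2 * z k * h') := by
  have hsq : HasFDerivAt (fun y : ι → ℝ => ∑ i, y i ^ 2)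
      (∑ i, (2 * z i) • ContinuousLinearMap.proj (R := ℝ) (φ := fun _ : ι => ℝ) i) z :=
    HasFDerivAt.fun_sum fun i _ => by
      simpa using ((ContinuousLinearMap.proj (R := ℝ) (φ := fun _ : ι => ℝ) i).hasFDerivAt
        (x := z)).pow 2
  have hcomp : HasFDerivAt (fun y : ι → ℝ => h (1 - ∑ i, y i ^ 2)) _ z :=
    hh.comp_hasFDerivAt z (hsq.const_sub 1)
  rw [dirDeriv, hcomp.fderiv]
  simp [Pi.single_apply]
  ring

/-- Two test functions with `∇ψ = z φ` and `∫ φ = 1`. The radial derivative of an average against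
`φ` is then, after an integration by parts, an average of the Laplacian against `ψ`. -/
structure IsRadialKernelPair (φ ψ : (ι → ℝ) → ℝ) : Prop where
  contDiff_left : ContDiff ℝ ∞ φ
  contDiff_right : ContDiff ℝ ∞ ψ
  hasCompactSupport_left : HasCompactSupport φ
  hasCompactSupport_right : HasCompactSupport ψ
  dirDeriv_right : ∀ k, ∂[k] ψ = fun z => z k * φ z
  integral_left : ∫ z, φ z = 1

lemma IsRadialKernelPair.of_integral_ne_zero {φ ψ : (ι → ℝ) → ℝ} (hφ : ContDiff ℝ ∞ φ)
    (hψ : ContDiff ℝ ∞ ψ) (hφs : HasCompactSupport φ) (hψs : HasCompactSupport ψ)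
    (hderiv : ∀ k z, ∂[k] ψ z = z k * φ z) (hne : ∫ z, φ z ≠ 0) :
    IsRadialKernelPair (fun z => (∫ y, φ y)⁻¹ * φ z) (fun z => (∫ y, φ y)⁻¹ * ψ z) where
  contDiff_left := contDiff_const.mul hφ
  contDiff_right := contDiff_const.mul hψ
  hasCompactSupport_left := hφs.mul_left
  hasCompactSupport_right := hψs.mul_left
  dirDeriv_right k := funext fun z => by
    rw [dirDeriv, fderiv_const_mul (hψ.differentiable (by simp) z), smul_apply, smul_eq_mul,
      mul_left_comm, ← hderiv k z, dirDeriv]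
  integral_left := by rw [integral_const_mul, inv_mul_cancel₀ hne]

variable (ι) in
lemma exists_isRadialKernelPair : ∃ φ ψ : (ι → ℝ) → ℝ, IsRadialKernelPair φ ψ := by
  have hderiv : deriv expNegInvGlue = fun x => x⁻¹ ^ 2 * expNegInvGlue x :=
    funext fun x => (hasDerivAt_expNegInvGlue x).deriv
  have hderiv_smooth : ContDiff ℝ ∞ (deriv expNegInvGlue) :=
    (contDiff_infty_iff_deriv.1 expNegInvGlue.contDiff).2
  have hsq : ContDiff ℝ ∞ fun z : ι → ℝ => 1 - ∑ i, z i ^ 2 := by fun_prop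
  let φ : (ι → ℝ) → ℝ := fun z => 2 * deriv expNegInvGlue (1 - ∑ i, z i ^ 2)
  let ψ : (ι → ℝ) → ℝ := fun z => -expNegInvGlue (1 - ∑ i, z i ^ 2)
  have hφ_smooth : ContDiff ℝ ∞ φ := contDiff_const.mul (hderiv_smooth.comp hsq)
  have hφ_supp : HasCompactSupport φ :=
    (hasCompactSupport_comp_one_sub_sum_sq fun t ht => by
      simp [hderiv, expNegInvGlue.zero_of_nonpos ht]).mul_left
  have hφ_pos : 0 < ∫ z, φ z := by
    refine hφ_smooth.continuous.integral_pos_of_hasCompactSupport_nonneg_nonzero hφ_supp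
      (fun z => ?_) (x := 0) ?_
    · have := expNegInvGlue.nonneg (1 - ∑ i, z i ^ 2)
      simp only [φ, hderiv, Pi.zero_apply]
      positivity
    · simp [φ, hderiv, (expNegInvGlue.pos_of_pos one_pos).ne']
  have hψ_smooth : ContDiff ℝ ∞ ψ := (expNegInvGlue.contDiff.comp hsq).neg
  have hψ_supp : HasCompactSupport ψ :=
    hasCompactSupport_comp_one_sub_sum_sq (h := fun t => -expNegInvGlue t) fun t ht => by
      simp [expNegInvGlue.zero_of_nonpos ht]
  refine ⟨_, _, .of_integral_ne_zero hφ_smooth hψ_smooth hφ_supp hψ_supp (fun k z => ?_)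
    hφ_pos.ne'⟩
  refine (dirDeriv_comp_one_sub_sum_sq (hasDerivAt_expNegInvGlue _).neg k).trans ?_
  simp only [φ, hderiv]
  ring

end RadialKernel

section HolderMoment

variable {X E : Type*} [NormedAddCommGroup X] [MeasureSpace X] [NormedAddCommGroup E]
  [NormedSpace ℝ E] {θ : X → ℝ} {f : X → E} {α K r : ℝ}

/-- The absolute moment of order `α` of a kernel: the factor lost when averaging an `α`-Hölder
function against it. -/
def holderMoment (α : ℝ) (θ : X → ℝ) : ℝ := ∫ z, |θ z| * ‖z‖ ^ α

lemma holderMoment_nonneg (α : ℝ) (θ : X → ℝ) : 0 ≤ holderMoment α θ :=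
  integral_nonneg fun z => by positivity

lemma norm_scaledAverage_le_of_integral_eq_zero [NormedSpace ℝ X] [BorelSpace X]
    [CompleteSpace E] [IsFiniteMeasureOnCompacts (volume : Measure X)] (hα : 0 ≤ α)
    (hθ : Continuous θ) (hsupp : HasCompactSupport θ) (hint : ∫ z, θ z = 0) (hr : 0 ≤ r)
    (hf : Continuous f)
    (hholder : ∀ x y, ‖f x - f y‖ ≤ K * ‖x - y‖ ^ α) (x : X) :
    ‖scaledAverage θ r f x‖ ≤ holderMoment α θ * K * r ^ α := by
  have hsub : scaledAverage θ r f x = ∫ z, θ z • (f (x - r • z) - f x) := by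
    simp only [smul_sub]
    rw [integral_sub (integrable_scaledAverage hθ hsupp r hf x)
      ((hθ.integrable_of_hasCompactSupport hsupp).smul_const (f x)), integral_smul_const, hint,
      zero_smul, sub_zero, scaledAverage]
  rw [hsub, mul_assoc, holderMoment, ← integral_mul_const]
  refine norm_integral_le_of_norm_le (Integrable.mul_const ?_ _) (Eventually.of_forall fun z => ?_)
  · have hcont : Continuous fun z : X => |θ z| * ‖z‖ ^ α :=
      hθ.abs.mul (continuous_norm.rpow_const fun _ => Or.inr hα)
    exact hcont.integrable_of_hasCompactSupport hsupp.norm.mul_right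
  · have hosc := hholder (x - r • z) x
    rw [sub_sub_cancel_left, norm_neg, norm_smul, Real.norm_eq_abs, abs_of_nonneg hr,
      Real.mul_rpow hr (norm_nonneg z)] at hosc
    calc ‖θ z • (f (x - r • z) - f x)‖ ≤ |θ z| * (K * (r ^ α * ‖z‖ ^ α)) := by
          rw [norm_smul, Real.norm_eq_abs]
          gcongr
      _ = |θ z| * ‖z‖ ^ α * (K * r ^ α) := by ring

end HolderMoment

section PiAverage

variable {ι : Type*} [Fintype ι] [DecidableEq ι] {E : Type*} [NormedAddCommGroup E]
  [NormedSpace ℝ E] {α K r : ℝ}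

lemma norm_scaledAverage_sub_le [CompleteSpace E] {θ : (ι → ℝ) → ℝ} (hα : 0 ≤ α)
    (hθ : ContDiff ℝ 1 θ) (hsupp : HasCompactSupport θ) (hr : 0 < r) {f : (ι → ℝ) → E}
    (hf : ContDiff ℝ 1 f)
    (hholder : ∀ x y, ‖f x - f y‖ ≤ K * ‖x - y‖ ^ α) (x y : ι → ℝ) :
    ‖scaledAverage θ r f x - scaledAverage θ r f y‖ ≤
      (∑ i, holderMoment α (∂[i] θ)) * K * r ^ (α - 1) * ‖x - y‖ := by
  refine convex_univ.norm_image_sub_le_of_norm_fderiv_le (𝕜 := ℝ)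
    (fun z _ => (hasFDerivAt_scaledAverage hθ.continuous hsupp r hf z).differentiableAt)
    (fun z _ => (clm_pi_norm_le _).trans ?_) (mem_univ y) (mem_univ x)
  rw [mul_assoc, Finset.sum_mul]
  refine Finset.sum_le_sum fun i _ => ?_
  have hosc := norm_scaledAverage_le_of_integral_eq_zero hα (continuous_dirDeriv hθ _)
    (hasCompactSupport_dirDeriv hsupp _) (integral_dirDeriv_eq_zero hθ hsupp (Pi.single i 1))
    hr.le hf.continuous hholder z
  rw [← smul_scaledAverage_dirDeriv hθ hsupp r hf, norm_smul, Real.norm_eq_abs,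
    abs_of_pos hr, ← le_div_iff₀' hr] at hosc
  calc ‖fderiv ℝ (scaledAverage θ r f) z (Pi.single i 1)‖
      = ‖scaledAverage θ r (∂[i] f) z‖ := by
        rw [← dirDeriv_scaledAverage hθ.continuous hsupp r hf]; rfl
    _ ≤ holderMoment α (∂[i] θ) * K * r ^ α / r := hosc
    _ = holderMoment α (∂[i] θ) * (K * r ^ (α - 1)) := by
        rw [Real.rpow_sub_one hr.ne']; ring

variable {φ ψ : (ι → ℝ) → ℝ}

namespace IsRadialKernelPair

lemma tendsto_scaledAverage [CompleteSpace E] (h : IsRadialKernelPair φ ψ) {f : (ι → ℝ) → E}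
    (hf : ContDiff ℝ 1 f) (x : ι → ℝ) :
    Tendsto (fun r => scaledAverage φ r f x) (𝓝[>] 0) (𝓝 (f x)) := by
  have hcont := (hasDerivAt_scaledAverage h.contDiff_left.continuous h.hasCompactSupport_left 0
    hf x).continuousAt.tendsto
  rw [scaledAverage_zero, h.integral_left, one_smul] at hcont
  exact hcont.mono_left nhdsWithin_le_nhds

lemma tendsto_scaledAverage_dirDeriv (h : IsRadialKernelPair φ ψ) {f : (ι → ℝ) → E} {M : ℝ}
    (hf : ContDiff ℝ 1 f) (hM : ∀ x, ‖f x‖ ≤ M) (v x : ι → ℝ) :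
    Tendsto (fun r => scaledAverage φ r (dirDeriv v f) x) atTop (𝓝 0) := by
  have hφ : ContDiff ℝ 1 φ := h.contDiff_left.of_le (by simp)
  have hlim : Tendsto (fun r : ℝ => (∫ z, |dirDeriv v φ z|) * M * r⁻¹) atTop (𝓝 0) := by
    simpa using tendsto_inv_atTop_zero.const_mul ((∫ z, |dirDeriv v φ z|) * M)
  refine squeeze_zero_norm' ?_ hlim
  filter_upwards [eventually_gt_atTop 0] with r hr
  have hbound := norm_scaledAverage_le (continuous_dirDeriv hφ v)
    (hasCompactSupport_dirDeriv h.hasCompactSupport_left v) hM r x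
  rwa [← smul_scaledAverage_dirDeriv hφ h.hasCompactSupport_left r hf, norm_smul,
    Real.norm_eq_abs, abs_of_pos hr, ← le_div_iff₀' hr, div_eq_mul_inv] at hbound

lemma hasDerivAt_scaledAverage_laplacian (h : IsRadialKernelPair φ ψ) {f : (ι → ℝ) → E}
    (hf : ContDiff ℝ 2 f) (x : ι → ℝ) (r : ℝ) :
    HasDerivAt (fun s => scaledAverage φ s f x)
      (-(r • ∑ k, scaledAverage ψ r (∂[k] (∂[k] f)) x)) r := by
  have hψ : ContDiff ℝ 1 ψ := h.contDiff_right.of_le (by simp)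
  have hfk : ∀ k, ContDiff ℝ 1 (∂[k] f) := fun k => contDiff_dirDeriv hf (by norm_num) _
  convert hasDerivAt_scaledAverage h.contDiff_left.continuous h.hasCompactSupport_left r
    (hf.of_le (by norm_num)) x using 2
  calc r • ∑ k, scaledAverage ψ r (∂[k] (∂[k] f)) x
      = ∑ k, ∫ z, (z k * φ z) • ∂[k] f (x - r • z) := by
        rw [Finset.smul_sum]
        refine Finset.sum_congr rfl fun k _ => ?_
        rw [smul_scaledAverage_dirDeriv hψ h.hasCompactSupport_right r (hfk k), h.dirDeriv_right,
          scaledAverage]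
    _ = ∫ z, ∑ k, (z k * φ z) • ∂[k] f (x - r • z) := by
        refine (integral_finsetSum _ fun k _ => ?_).symm
        simpa only [h.dirDeriv_right] using integrable_scaledAverage
          (continuous_dirDeriv hψ (Pi.single k 1))
          (hasCompactSupport_dirDeriv h.hasCompactSupport_right _) r (hfk k).continuous x
    _ = ∫ z, φ z • dirDeriv z f (x - r • z) := by
        refine integral_congr_ae (Eventually.of_forall fun z => ?_)
        simp only [dirDeriv]
        rw [clm_pi_apply_eq_sum _ z, Finset.smul_sum]
        simp only [smul_smul, mul_comm]

end IsRadialKernelPair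

end PiAverage

section Multiscale

variable {E : Type*} [NormedAddCommGroup E] [NormedSpace ℝ E] {α a b R : ℝ} {f f' : ℝ → E} {e : E}

lemma norm_sub_le_of_norm_deriv_le_rpow {β c : ℝ} (hβ : β ≠ 0)
    (hderiv : ∀ r > 0, HasDerivAt f (f' r) r) (hbound : ∀ r > 0, ‖f' r‖ ≤ a * r ^ (β - 1))
    (hb : 0 < b) (hbc : b ≤ c) : ‖f c - f b‖ ≤ a * ((c ^ β - b ^ β) / β) := by
  have hrpow : ∀ r > 0,
      HasDerivAt (fun r : ℝ => a * ((r ^ β - b ^ β) / β)) (a * r ^ (β - 1)) r := by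
    intro r hr
    have h := (((Real.hasDerivAt_rpow_const (p := β) (Or.inl hr.ne')).sub_const
      (b ^ β)).div_const β).const_mul a
    rwa [mul_div_cancel_left₀ _ hβ] at h
  have hpos : ∀ x ∈ Icc b c, 0 < x := fun x hx => hb.trans_le hx.1
  refine image_norm_le_of_norm_deriv_right_le_deriv_boundary' (f := fun r => f r - f b) (f' := f')
    (B := fun r : ℝ => a * ((r ^ β - b ^ β) / β)) (B' := fun r => a * r ^ (β - 1))
    (fun x hx => ((hderiv x (hpos x hx)).sub_const _).continuousAt.continuousWithinAt)
    (fun x hx => ((hderiv x (hpos x ⟨hx.1, hx.2.le⟩)).sub_const _).hasDerivWithinAt) (by simp)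
    (fun x hx => (hrpow x (hpos x hx)).continuousAt.continuousWithinAt)
    (fun x hx => (hrpow x (hpos x ⟨hx.1, hx.2.le⟩)).hasDerivWithinAt)
    (fun x hx => hbound x (hpos x ⟨hx.1, hx.2.le⟩)) (right_mem_Icc.2 hbc)

lemma norm_sub_le_of_tendsto_nhdsGT_zero (hα : 0 < α) (ha : 0 ≤ a)
    (hderiv : ∀ r > 0, HasDerivAt f (f' r) r) (hbound : ∀ r > 0, ‖f' r‖ ≤ a * r ^ (α - 1))
    (hlim : Tendsto f (𝓝[>] 0) (𝓝 e)) (hR : 0 < R) : ‖f R - e‖ ≤ a / α * R ^ α := by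
  refine le_of_tendsto (tendsto_const_nhds.sub hlim).norm ?_
  filter_upwards [Ioo_mem_nhdsGT hR] with r hr
  calc ‖f R - f r‖ ≤ a * ((R ^ α - r ^ α) / α) :=
        norm_sub_le_of_norm_deriv_le_rpow hα.ne' hderiv hbound hr.1 hr.2.le
    _ ≤ a * (R ^ α / α) := by
        gcongr
        exact sub_le_self _ (Real.rpow_nonneg hr.1.le α)
    _ = a / α * R ^ α := by ring

lemma norm_le_of_tendsto_atTop_zero (hα : α < 1) (ha : 0 ≤ a)
    (hderiv : ∀ r > 0, HasDerivAt f (f' r) r) (hbound : ∀ r > 0, ‖f' r‖ ≤ a * r ^ (α - 2))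
    (hlim : Tendsto f atTop (𝓝 0)) (hR : 0 < R) : ‖f R‖ ≤ a / (1 - α) * R ^ (α - 1) := by
  have : 0 < 1 - α := by linarith
  have htail := ((tendsto_const_nhds (x := f R)).sub hlim).norm
  rw [sub_zero] at htail
  refine le_of_tendsto htail ?_
  filter_upwards [eventually_ge_atTop R] with T hT
  rw [norm_sub_rev]
  calc ‖f T - f R‖ ≤ a * ((T ^ (α - 1) - R ^ (α - 1)) / (α - 1)) :=
        norm_sub_le_of_norm_deriv_le_rpow (by linarith) hderiv
          (by simpa only [show α - 1 - 1 = α - 2 by ring] using hbound) hR hT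
    _ = a * ((R ^ (α - 1) - T ^ (α - 1)) / (1 - α)) := by
        rw [← neg_sub (R ^ _), ← neg_sub 1 α, neg_div_neg_eq]
    _ ≤ a * (R ^ (α - 1) / (1 - α)) := by
        gcongr
        exact sub_le_self _ (Real.rpow_nonneg (hR.le.trans hT) _)
    _ = a / (1 - α) * R ^ (α - 1) := by ring

-- Compare `g x` and `g y` through the averages at the scale `r = ‖x - y‖`: below it integrate
-- `∂_r A` at each point, above it integrate `∂_r (A x - A y)`.
lemma norm_sub_le_rpow_of_multiscale {X : Type*} [NormedAddCommGroup X] {A A' : ℝ → X → E}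
    {g : X → E} (hα : 0 < α) (hα' : α < 1) (ha : 0 ≤ a) (hb : 0 ≤ b)
    (hderiv : ∀ r > 0, ∀ x, HasDerivAt (fun s => A s x) (A' r x) r)
    (hbound : ∀ r > 0, ∀ x, ‖A' r x‖ ≤ a * r ^ (α - 1))
    (hlip : ∀ r > 0, ∀ x y, ‖A' r x - A' r y‖ ≤ b * r ^ (α - 2) * ‖x - y‖)
    (hzero : ∀ x, Tendsto (fun r => A r x) (𝓝[>] 0) (𝓝 (g x)))
    (htop : ∀ x, Tendsto (fun r => A r x) atTop (𝓝 0)) (x y : X) :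
    ‖g x - g y‖ ≤ (2 * a / α + b / (1 - α)) * ‖x - y‖ ^ α := by
  rcases eq_or_ne x y with rfl | hxy
  · simp [Real.zero_rpow hα.ne']
  set R := ‖x - y‖
  have hR : 0 < R := norm_pos_iff.2 (sub_ne_zero.2 hxy)
  have hnear : ∀ z, ‖A R z - g z‖ ≤ a / α * R ^ α := fun z =>
    norm_sub_le_of_tendsto_nhdsGT_zero hα ha (fun r hr => hderiv r hr z)
      (fun r hr => hbound r hr z) (hzero z) hR
  have hfar : ‖A R x - A R y‖ ≤ b * R / (1 - α) * R ^ (α - 1) :=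
    norm_le_of_tendsto_atTop_zero hα' (by positivity)
      (fun r hr => (hderiv r hr x).sub (hderiv r hr y))
      (fun r hr => (hlip r hr x y).trans_eq (by ring))
      (sub_zero (0 : E) ▸ (htop x).sub (htop y)) hR
  have hsplit : g x - g y = -(A R x - g x) + (A R y - g y) + (A R x - A R y) := by abel
  calc ‖g x - g y‖ ≤ ‖A R x - g x‖ + ‖A R y - g y‖ + ‖A R x - A R y‖ := by
        rw [hsplit, ← norm_neg (A R x - g x)]
        exact norm_add₃_le
    _ ≤ a / α * R ^ α + a / α * R ^ α + b * R / (1 - α) * R ^ (α - 1) := by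
        gcongr <;> apply_rules
    _ = (2 * a / α + b / (1 - α)) * R ^ α := by
        rw [Real.rpow_sub_one hR.ne']
        field_simp
        ring

end Multiscale

section HolderEstimate

variable {ι : Type*} [Fintype ι] [DecidableEq ι] {E : Type*} [NormedAddCommGroup E]
  [NormedSpace ℝ E] {φ ψ : (ι → ℝ) → ℝ} {α K : ℝ}
  {u : (ι → ℝ) → E} {F : ι → (ι → ℝ) → E}

lemma norm_inv_smul_sum_scaledAverage_dirDeriv_le [CompleteSpace E] {θ : (ι → ℝ) → ℝ}
    (hα : 0 ≤ α) (hθ : ContDiff ℝ 1 θ) (hsupp : HasCompactSupport θ) {r : ℝ} (hr : 0 < r)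
    (hF : ∀ k, Continuous (F k)) (hholder : ∀ k x y, ‖F k x - F k y‖ ≤ K * ‖x - y‖ ^ α)
    (x : ι → ℝ) :
    ‖r⁻¹ • ∑ k, scaledAverage (∂[k] θ) r (F k) x‖ ≤
      (∑ k, holderMoment α (∂[k] θ)) * K * r ^ (α - 1) := by
  rw [norm_smul, norm_inv, Real.norm_eq_abs, abs_of_pos hr, Real.rpow_sub_one hr.ne',
    inv_mul_eq_div, mul_div_assoc', Finset.sum_mul, Finset.sum_mul]
  gcongr
  exact norm_sum_le_of_le _ fun k _ => norm_scaledAverage_le_of_integral_eq_zero hα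
    (continuous_dirDeriv hθ _) (hasCompactSupport_dirDeriv hsupp _)
    (integral_dirDeriv_eq_zero hθ hsupp _) hr.le (hF k) (hholder k) x

lemma norm_inv_smul_sum_scaledAverage_sub_le [CompleteSpace E] {θ : ι → (ι → ℝ) → ℝ}
    (hα : 0 ≤ α) (hθ : ∀ k, ContDiff ℝ 1 (θ k)) (hsupp : ∀ k, HasCompactSupport (θ k)) {r : ℝ}
    (hr : 0 < r) (hF : ∀ k, ContDiff ℝ 1 (F k))
    (hholder : ∀ k x y, ‖F k x - F k y‖ ≤ K * ‖x - y‖ ^ α) (x y : ι → ℝ) :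
    ‖r⁻¹ • ∑ k, scaledAverage (θ k) r (F k) x - r⁻¹ • ∑ k, scaledAverage (θ k) r (F k) y‖ ≤
      (∑ k, ∑ i, holderMoment α (∂[i] (θ k))) * K * r ^ (α - 2) * ‖x - y‖ := by
  rw [← smul_sub, ← Finset.sum_sub_distrib, norm_smul, norm_inv, Real.norm_eq_abs, abs_of_pos hr,
    show α - 2 = α - 1 - 1 by ring, Real.rpow_sub_one hr.ne', inv_mul_eq_div, mul_div_assoc',
    div_mul_eq_mul_div, Finset.sum_mul, Finset.sum_mul, Finset.sum_mul]
  gcongr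
  exact norm_sum_le_of_le _ fun k _ =>
    norm_scaledAverage_sub_le hα (hθ k) (hsupp k) hr (hF k) (hholder k) x y

namespace IsRadialKernelPair

lemma hasDerivAt_scaledAverage_dirDeriv (h : IsRadialKernelPair φ ψ) (hu : ContDiff ℝ 3 u)
    (hF : ∀ k, ContDiff ℝ 1 (F k))
    (hΔ : ∀ x, ∑ k, ∂[k] (∂[k] u) x = ∑ k, ∂[k] (F k) x) (j : ι) (x : ι → ℝ) {r : ℝ}
    (hr : r ≠ 0) :
    HasDerivAt (fun s => scaledAverage φ s (∂[j] u) x)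
      (-(r⁻¹ • ∑ k, scaledAverage (∂[k] (∂[j] ψ)) r (F k) x)) r := by
  have hψ : ContDiff ℝ 2 ψ := mod_cast contDiff_infty.1 h.contDiff_right 2
  have hψ' : ContDiff ℝ 1 (∂[j] ψ) := contDiff_dirDeriv hψ (by norm_num) _
  have hsupp := h.hasCompactSupport_right
  have hsupp' : HasCompactSupport (∂[j] ψ) := hasCompactSupport_dirDeriv hsupp _
  have hu' : ∀ i, ContDiff ℝ 2 (∂[i] u) := fun i => contDiff_dirDeriv hu (by norm_num) _
  have hu'' : ∀ i k, ContDiff ℝ 1 (∂[k] (∂[i] u)) := fun i k =>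
    contDiff_dirDeriv (hu' i) (by norm_num) _
  have hcomm : ∀ k, ∂[k] (∂[k] (∂[j] u)) = ∂[j] (∂[k] (∂[k] u)) := fun k => by
    rw [dirDeriv_comm (hu.of_le (by norm_num)), dirDeriv_comm (hu' k)]
  convert h.hasDerivAt_scaledAverage_laplacian (hu' j) x r using 2
  rw [inv_smul_eq_iff₀ hr]
  calc ∑ k, scaledAverage (∂[k] (∂[j] ψ)) r (F k) x
      = r • scaledAverage (∂[j] ψ) r (fun y => ∑ k, ∂[k] (F k) y) x := by
        rw [scaledAverage_sum hψ'.continuous hsupp' r _ fun k _ => continuous_dirDeriv (hF k) _,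
          Finset.smul_sum]
        exact Finset.sum_congr rfl fun k _ =>
          (smul_scaledAverage_dirDeriv hψ' hsupp' r (hF k) _ x).symm
    _ = r • ∑ k, scaledAverage (∂[j] ψ) r (∂[k] (∂[k] u)) x := by
        simp only [← hΔ]
        rw [scaledAverage_sum hψ'.continuous hsupp' r _ fun k _ => (hu'' k k).continuous]
    _ = r • r • ∑ k, scaledAverage ψ r (∂[k] (∂[k] (∂[j] u))) x := by
        simp only [hcomm, Finset.smul_sum, fun k =>
          smul_scaledAverage_dirDeriv (hψ.of_le (by norm_num)) hsupp r (hu'' k k) (Pi.single j 1) x]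

lemma holder_dirDeriv [CompleteSpace E] (h : IsRadialKernelPair φ ψ) (hα : 0 < α) (hα' : α < 1)
    (hK : 0 ≤ K) (hu : ContDiff ℝ 3 u) (hbdd : ∃ M, ∀ x, ‖u x‖ ≤ M)
    (hF : ∀ k, ContDiff ℝ 1 (F k)) (hΔ : ∀ x, ∑ k, ∂[k] (∂[k] u) x = ∑ k, ∂[k] (F k) x)
    (hholder : ∀ k x y, ‖F k x - F k y‖ ≤ K * ‖x - y‖ ^ α) (j : ι) (x y : ι → ℝ) :
    ‖∂[j] u x - ∂[j] u y‖ ≤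
      (2 * (∑ k, holderMoment α (∂[k] (∂[j] ψ))) / α +
        (∑ k, ∑ i, holderMoment α (∂[i] (∂[k] (∂[j] ψ)))) / (1 - α)) * K * ‖x - y‖ ^ α := by
  obtain ⟨M, hM⟩ := hbdd
  set a := ∑ k, holderMoment α (∂[k] (∂[j] ψ))
  set b := ∑ k, ∑ i, holderMoment α (∂[i] (∂[k] (∂[j] ψ)))
  have ha : 0 ≤ a := Finset.sum_nonneg fun k _ => holderMoment_nonneg _ _
  have hb : 0 ≤ b := Finset.sum_nonneg fun k _ => Finset.sum_nonneg fun i _ =>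
    holderMoment_nonneg _ _
  have hψ : ContDiff ℝ 3 ψ := mod_cast contDiff_infty.1 h.contDiff_right 3
  have hψj : ContDiff ℝ 2 (∂[j] ψ) := contDiff_dirDeriv hψ (by norm_num) _
  have hψj_supp : HasCompactSupport (∂[j] ψ) :=
    hasCompactSupport_dirDeriv h.hasCompactSupport_right _
  have hψkj : ∀ k, ContDiff ℝ 1 (∂[k] (∂[j] ψ)) := fun k =>
    contDiff_dirDeriv hψj (by norm_num) _
  have hψkj_supp : ∀ k, HasCompactSupport (∂[k] (∂[j] ψ)) := fun k =>
    hasCompactSupport_dirDeriv hψj_supp _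
  exact (norm_sub_le_rpow_of_multiscale hα hα' (mul_nonneg ha hK) (mul_nonneg hb hK)
    (fun r hr z => h.hasDerivAt_scaledAverage_dirDeriv hu hF hΔ j z hr.ne')
    (fun r hr z => (norm_neg _).trans_le <| norm_inv_smul_sum_scaledAverage_dirDeriv_le hα.le
      (hψj.of_le (by norm_num)) hψj_supp hr (fun k => (hF k).continuous) hholder z)
    (fun r hr z w => by
      rw [neg_sub_neg, norm_sub_rev]
      exact norm_inv_smul_sum_scaledAverage_sub_le hα.le hψkj hψkj_supp hr hF hholder z w)
    (h.tendsto_scaledAverage (contDiff_dirDeriv hu (by norm_num) _))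
    (h.tendsto_scaledAverage_dirDeriv (hu.of_le (by norm_num)) hM _) x y).trans_eq (by ring)

end IsRadialKernelPair

end HolderEstimate

section Periodic

lemma norm_le_of_norm_dirDeriv_sub_le {X E : Type*} [NormedAddCommGroup X] [NormedSpace ℝ X]
    [NormedAddCommGroup E] [NormedSpace ℝ E] {u : X → E} {v : X} (hu : Differentiable ℝ u)
    (hper : Function.Periodic u v) {x : X} {c : E} {B : ℝ}
    (hB : ∀ s ∈ Ico (0 : ℝ) 1, ‖dirDeriv v u (x + s • v) - c‖ ≤ B) : ‖c‖ ≤ B := by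
  have hderiv : ∀ s : ℝ,
      HasDerivAt (fun s : ℝ => u (x + s • v) - s • c) (dirDeriv v u (x + s • v) - c) s := by
    intro s
    have hline : HasDerivAt (fun s : ℝ => x + s • v) v s := by
      simpa using ((hasDerivAt_id s).smul_const v).const_add x
    have hscale : HasDerivAt (fun s : ℝ => s • c) c s := by
      simpa using (hasDerivAt_id s).smul_const c
    exact ((hu _).hasFDerivAt.comp_hasDerivAt s hline).sub hscale
  simpa [hper x] using
    norm_image_sub_le_of_norm_deriv_le_segment_01' (fun s _ => (hderiv s).hasDerivWithinAt) hB

variable {ι : Type*} {E : Type*} {f : (ι → ℝ) → E}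

/-- Periodicity with respect to the lattice of integer points: a function on the torus `ℝ^ι/ℤ^ι`,
seen as a function on its universal cover. -/
def UnitPeriodic (f : (ι → ℝ) → E) : Prop :=
  ∀ (x : ι → ℝ) (k : ι → ℤ), f (x + fun i => (k i : ℝ)) = f x

namespace UnitPeriodic

lemma periodic_single [DecidableEq ι] (hf : UnitPeriodic f) (i : ι) :
    Function.Periodic f (Pi.single i 1) := fun x => by
  have hcast : (fun j => ((Pi.single i 1 : ι → ℤ) j : ℝ)) = Pi.single i 1 := by
    ext j
    by_cases hj : j = i <;> simp [hj]
  simpa only [hcast] using hf x (Pi.single i 1)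

lemma scaledAverage [Fintype ι] [NormedAddCommGroup E] [NormedSpace ℝ E] (hf : UnitPeriodic f)
    (θ : (ι → ℝ) → ℝ) (r : ℝ) : UnitPeriodic (scaledAverage θ r f) := fun x k => by
  simp only [_root_.scaledAverage, add_sub_right_comm, hf _ k]

variable [NormedAddCommGroup E]

lemma exists_norm_le (hf : UnitPeriodic f) (hcont : Continuous f) : ∃ M, ∀ x, ‖f x‖ ≤ M := by
  obtain ⟨M, hM⟩ := (isCompact_Icc (a := (0 : ι → ℝ)) (b := 1)).exists_bound_of_continuousOn
    hcont.continuousOn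
  refine ⟨M, fun x => ?_⟩
  have hx : (fun i => Int.fract (x i)) + (fun i => (⌊x i⌋ : ℝ)) = x :=
    funext fun i => Int.fract_add_floor (x i)
  rw [← hx, hf]
  exact hM _ ⟨fun i => Int.fract_nonneg _, fun i => (Int.fract_lt_one _).le⟩

variable [Fintype ι] [NormedSpace ℝ E]

protected lemma fderiv (hf : UnitPeriodic f) : UnitPeriodic (fderiv ℝ f) := fun x k => by
  rw [← fderiv_comp_add_right, funext fun y => hf y k]

lemma uniformContinuous (hf : UnitPeriodic f) (hsmooth : ContDiff ℝ 1 f) :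
    UniformContinuous f := by
  obtain ⟨M, hM⟩ := hf.fderiv.exists_norm_le (hsmooth.continuous_fderiv (by simp))
  refine (lipschitzWith_of_nnnorm_fderiv_le (C := M.toNNReal)
    (hsmooth.differentiable (by simp)) fun x => ?_).uniformContinuous
  exact NNReal.coe_le_coe.1 ((hM x).trans (Real.le_coe_toNNReal M))

lemma holderBound_zero_fderiv [DecidableEq ι] (hf : UnitPeriodic f) (hsmooth : ContDiff ℝ 1 f)
    {α : ℝ} (hα : 0 ≤ α) {K : ι → ℝ}
    (hholder : ∀ j x y, ‖∂[j] f x - ∂[j] f y‖ ≤ K j * ‖x - y‖ ^ α) :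
    HolderBound 0 α (∑ j, K j) (fderiv ℝ f) := by
  refine HolderBound.zero_iff.2 ⟨hsmooth.continuous_fderiv (by simp), fun x => ?_, fun x y => ?_⟩
  · refine (clm_pi_norm_le _).trans (Finset.sum_le_sum fun j _ => ?_)
    refine norm_le_of_norm_dirDeriv_sub_le (hsmooth.differentiable (by simp))
      (hf.periodic_single j) (x := x) (c := ∂[j] f x) fun s hs => ?_
    have hK : 0 ≤ K j := by
      simpa [Pi.norm_single] using (norm_nonneg _).trans (hholder j (Pi.single j 1) 0)
    have hdist : ‖x + s • Pi.single j (1 : ℝ) - x‖ = s := by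
      simp [norm_smul, Pi.norm_single, abs_of_nonneg hs.1]
    calc ‖∂[j] f (x + s • Pi.single j 1) - ∂[j] f x‖ ≤ K j * s ^ α :=
          (hholder j _ x).trans_eq (by rw [hdist])
      _ ≤ K j := mul_le_of_le_one_right hK (Real.rpow_le_one hs.1 hs.2.le hα)
  · rw [Finset.sum_mul]
    exact (clm_pi_norm_le _).trans (Finset.sum_le_sum fun j _ => hholder j x y)

end UnitPeriodic

end Periodic

section Schauder

lemma laplacian_fderiv_eq {ι E : Type*} [Fintype ι] [DecidableEq ι] [NormedAddCommGroup E]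
    [NormedSpace ℝ E] {u : (ι → ℝ) → E} {F : ι → (ι → ℝ) → E} (hu : ContDiff ℝ ∞ u)
    (hF : ∀ k, ContDiff ℝ ∞ (F k))
    (hΔ : ∀ x, ∑ k, ∂[k] (∂[k] u) x = ∑ k, ∂[k] (F k) x) (x : ι → ℝ) :
    ∑ k, ∂[k] (∂[k] (fderiv ℝ u)) x = ∑ k, ∂[k] (fderiv ℝ (F k)) x := by
  have hu' : ∀ k, ContDiff ℝ ∞ (∂[k] u) := fun k => contDiff_dirDeriv hu (by simp) _
  have hu'' : ∀ k, ContDiff ℝ ∞ (∂[k] (∂[k] u)) := fun k => contDiff_dirDeriv (hu' k) (by simp) _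
  have hF' : ∀ k, ContDiff ℝ ∞ (∂[k] (F k)) := fun k => contDiff_dirDeriv (hF k) (by simp) _
  simp only [dirDeriv_fderiv (contDiff_infty.1 hu 2), dirDeriv_fderiv (contDiff_infty.1 (hu' _) 2),
    dirDeriv_fderiv (contDiff_infty.1 (hF _) 2)]
  rw [← fderiv_fun_sum fun k _ => (hu'' k).differentiable (by simp) x,
    ← fderiv_fun_sum fun k _ => (hF' k).differentiable (by simp) x, funext hΔ]

lemma exists_holderBound_zero_fderiv_of_laplacian_eq (ι : Type*) [Fintype ι] [DecidableEq ι]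
    {α : ℝ} (hα : 0 < α) (hα' : α < 1) :
    ∃ C, 0 ≤ C ∧ ∀ {E : Type u} [NormedAddCommGroup E] [NormedSpace ℝ E] [CompleteSpace E]
      {u : (ι → ℝ) → E} {F : ι → (ι → ℝ) → E} {K : ℝ}, ContDiff ℝ ∞ u → UnitPeriodic u →
      (∀ k, ContDiff ℝ ∞ (F k)) → (∀ x, ∑ k, ∂[k] (∂[k] u) x = ∑ k, ∂[k] (F k) x) →
      (∀ k, HolderBound 0 α K (F k)) → HolderBound 0 α (C * K) (fderiv ℝ u) := by
  obtain ⟨φ, ψ, h⟩ := exists_isRadialKernelPair ι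
  set c : ι → ℝ := fun j => 2 * (∑ k, holderMoment α (∂[k] (∂[j] ψ))) / α +
    (∑ k, ∑ i, holderMoment α (∂[i] (∂[k] (∂[j] ψ)))) / (1 - α)
  have hc : ∀ j, 0 ≤ c j := fun j => add_nonneg
    (div_nonneg (mul_nonneg two_pos.le (Finset.sum_nonneg fun k _ => holderMoment_nonneg _ _))
      hα.le)
    (div_nonneg (Finset.sum_nonneg fun k _ => Finset.sum_nonneg fun i _ => holderMoment_nonneg _ _)
      (sub_nonneg.2 hα'.le))
  refine ⟨∑ j, c j, Finset.sum_nonneg fun j _ => hc j, ?_⟩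
  intro E _ _ _ u F K hu hper hF hΔ hFK
  rw [Finset.sum_mul]
  exact hper.holderBound_zero_fderiv (hu.of_le (by simp)) hα.le fun j =>
    h.holder_dirDeriv hα hα' (hFK j).nonneg (mod_cast contDiff_infty.1 hu 3)
      (hper.exists_norm_le hu.continuous) (fun k => (hF k).of_le (by simp)) hΔ
      (fun k => (hFK k).holder) j

theorem exists_holderBound_fderiv_of_laplacian_eq (ι : Type u) [Fintype ι] [DecidableEq ι] {α : ℝ}
    (hα : 0 < α) (hα' : α < 1) :
    ∃ C, 0 ≤ C ∧ ∀ (n : ℕ) {E : Type u} [NormedAddCommGroup E] [NormedSpace ℝ E] [CompleteSpace E]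
      {u : (ι → ℝ) → E} {F : ι → (ι → ℝ) → E} {K : ℝ}, ContDiff ℝ ∞ u → UnitPeriodic u →
      (∀ k, ContDiff ℝ ∞ (F k)) → (∀ x, ∑ k, ∂[k] (∂[k] u) x = ∑ k, ∂[k] (F k) x) →
      (∀ k, HolderBound n α K (F k)) → HolderBound n α (C * K) (fderiv ℝ u) := by
  obtain ⟨C, hC, hzero⟩ := exists_holderBound_zero_fderiv_of_laplacian_eq.{u} ι hα hα'
  refine ⟨C, hC, fun n => ?_⟩
  induction n with
  | zero => exact hzero
  | succ n ih =>
    intro E _ _ _ u F K hu hper hF hΔ hFK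
    have hu' : ContDiff ℝ ∞ (fderiv ℝ u) := hu.fderiv_right (by simp)
    exact HolderBound.succ_iff.2 ⟨hu'.differentiable (by simp),
      hzero hu hper hF hΔ fun k => (hFK k).of_le (Nat.zero_le _),
      ih hu' hper.fderiv (fun k => (hF k).fderiv_right (by simp)) (laplacian_fderiv_eq hu hF hΔ)
        fun k => (hFK k).fderiv⟩

end Schauder

section Mollification

lemma exists_contDiffBump_tendsto_rOut (X : Type*) [NormedAddCommGroup X] :
    ∃ φ : ℕ → ContDiffBump (0 : X), Tendsto (fun N => (φ N).rOut) atTop (𝓝 0) :=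
  ⟨fun N => ⟨1 / ((N : ℝ) + 1) / 2, 1 / ((N : ℝ) + 1), by positivity, half_lt_self (by positivity)⟩,
    tendsto_one_div_add_atTop_nhds_zero_nat⟩

lemma HolderBound.scaledAverage {X E : Type u} [NormedAddCommGroup X] [NormedSpace ℝ X]
    [FiniteDimensional ℝ X] [MeasureSpace X] [BorelSpace X]
    [IsFiniteMeasureOnCompacts (volume : Measure X)] [NormedAddCommGroup E] [NormedSpace ℝ E]
    {θ : X → ℝ} {f : X → E} {n : ℕ} {α K : ℝ} (hθ : Continuous θ)
    (hsupp : HasCompactSupport θ) (r : ℝ) (hf : HolderBound n α K f) :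
    HolderBound n α ((∫ z, |θ z|) * K) (scaledAverage θ r f) := by
  have hzero : ∀ {E : Type u} [NormedAddCommGroup E] [NormedSpace ℝ E] {f : X → E},
      HolderBound 0 α K f → HolderBound 0 α ((∫ z, |θ z|) * K) (_root_.scaledAverage θ r f) := by
    intro E _ _ f hf
    have hcont := hf.contDiff.continuous
    refine zero_iff.2 ⟨continuous_scaledAverage hθ hsupp r hcont,
      norm_scaledAverage_le hθ hsupp hf.bound r, fun x y => ?_⟩
    have hshift := congrFun (scaledAverage_sub hθ hsupp r (f := fun z => f (x + z))
      (g := fun z => f (y + z)) (by fun_prop) (by fun_prop)) 0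
    simp only [_root_.scaledAverage, zero_sub, ← sub_eq_add_neg] at hshift
    rw [_root_.scaledAverage, _root_.scaledAverage, ← hshift, mul_assoc]
    have hosc : ∀ z, ‖f (x + z) - f (y + z)‖ ≤ K * ‖x - y‖ ^ α := fun z => by
      simpa using hf.holder (x + z) (y + z)
    simpa [_root_.scaledAverage, sub_eq_add_neg] using norm_scaledAverage_le hθ hsupp hosc r 0
  induction n generalizing E with
  | zero => exact hzero hf
  | succ n ih =>
    have hderiv := hasFDerivAt_scaledAverage hθ hsupp r (hf.contDiff.of_le (m := 1) (by simp))
    refine succ_iff.2 ⟨fun x => (hderiv x).differentiableAt, hzero (hf.of_le (Nat.zero_le _)), ?_⟩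
    rw [funext fun x => (hderiv x).fderiv]
    exact ih hf.fderiv

variable {X E : Type*} [NormedAddCommGroup X] [NormedSpace ℝ X] [MeasureSpace X]
  [NormedAddCommGroup E] [NormedSpace ℝ E] {θ : X → ℝ} {f : X → E}

open scoped Convolution in
lemma scaledAverage_one_eq_convolution (θ : X → ℝ) (f : X → E) :
    scaledAverage θ 1 f = θ ⋆[ContinuousLinearMap.lsmul ℝ ℝ, volume] f := by
  funext x
  simp [scaledAverage, convolution]

variable [FiniteDimensional ℝ X] [BorelSpace X] [(volume : Measure X).IsAddHaarMeasure]

lemma contDiff_scaledAverage_one {n : ℕ∞} (hθ : ContDiff ℝ n θ) (hsupp : HasCompactSupport θ)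
    (hf : Continuous f) : ContDiff ℝ n (scaledAverage θ 1 f) := by
  rw [scaledAverage_one_eq_convolution]
  exact hsupp.contDiff_convolution_left _ hθ hf.locallyIntegrable

lemma integral_abs_normed (φ : ContDiffBump (0 : X)) : ∫ z, |φ.normed volume z| = 1 := by
  simpa only [abs_of_nonneg (φ.nonneg_normed _)] using φ.integral_normed

lemma tendstoUniformly_scaledAverage_normed [CompleteSpace E] {κ : Type*} {l : Filter κ}
    {φ : κ → ContDiffBump (0 : X)} (hφ : Tendsto (fun i => (φ i).rOut) l (𝓝 0))
    (hf : UniformContinuous f) :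
    TendstoUniformly (fun i => scaledAverage ((φ i).normed volume) 1 f) f l := by
  refine Metric.tendstoUniformly_iff.2 fun ε hε => ?_
  obtain ⟨δ, hδ, hfδ⟩ := Metric.uniformContinuous_iff.1 hf (ε / 2) (half_pos hε)
  filter_upwards [hφ.eventually (gt_mem_nhds hδ)] with i hi x
  rw [dist_comm, scaledAverage_one_eq_convolution]
  refine lt_of_le_of_lt ((φ i).dist_normed_convolution_le
    hf.continuous.aestronglyMeasurable fun y hy => ?_) (half_lt_self hε)
  exact (hfδ ((Metric.mem_ball.1 hy).trans hi)).le

end Mollification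

section DivCurl

variable {ι E : Type*} [Fintype ι] [DecidableEq ι] [NormedAddCommGroup E]
  [NormedSpace ℝ E] {w : ι → (ι → ℝ) → E} {p : (ι → ℝ) → E}

lemma laplacian_eq_sum_dirDeriv_curl (hw : ∀ i, ContDiff ℝ 2 (w i))
    (hdiv : ∀ x, ∑ k, ∂[k] (w k) x = 0) (i : ι) (x : ι → ℝ) :
    ∑ k, ∂[k] (∂[k] (w i)) x = ∑ k, ∂[k] (fun y => ∂[k] (w i) y - ∂[i] (w k) y) x := by
  have hw' : ∀ k i, Differentiable ℝ (∂[k] (w i)) := fun k i =>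
    (contDiff_dirDeriv (hw i) (m := 1) (by norm_num) _).differentiable (by simp)
  have hzero : ∑ k, ∂[i] (∂[k] (w k)) x = 0 := by
    rw [← congrFun (dirDeriv_sum (fun k _ => hw' k k) (Pi.single i 1)) x, funext hdiv]
    simp [dirDeriv]
  have hsub : ∀ k, ∂[k] (fun y => ∂[k] (w i) y - ∂[i] (w k) y) x =
      ∂[k] (∂[k] (w i)) x - ∂[i] (∂[k] (w k)) x := fun k => by
    rw [dirDeriv_sub (hw' k i) (hw' i k), dirDeriv_comm (hw k) (Pi.single i 1)]
  simp only [hsub, Finset.sum_sub_distrib, hzero, sub_zero]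

lemma norm_le_of_norm_add_dirDeriv_le {w : (ι → ℝ) → E} {A M : ℝ}
    (hw : Differentiable ℝ w) (hw' : ∀ x, ‖fderiv ℝ w x‖ ≤ M) (hp : Differentiable ℝ p)
    (hper : UnitPeriodic p) (i : ι) (hA : ∀ x, ‖w x + ∂[i] p x‖ ≤ A) (x : ι → ℝ) :
    ‖w x‖ ≤ A + M := by
  rw [← norm_neg]
  refine norm_le_of_norm_dirDeriv_sub_le hp (hper.periodic_single i) (x := x) fun s hs => ?_
  set y := x + s • Pi.single i (1 : ℝ) with hy
  have hlip : ‖w y - w x‖ ≤ M := by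
    refine (Convex.norm_image_sub_le_of_norm_fderiv_le (𝕜 := ℝ) (fun z _ => hw z)
      (fun z _ => hw' z) convex_univ (mem_univ x) (mem_univ y)).trans
      (mul_le_of_le_one_right ((norm_nonneg _).trans (hw' x)) ?_)
    simpa [hy, norm_smul, Pi.norm_single, abs_of_nonneg hs.1] using hs.2.le
  calc ‖∂[i] p y - -w x‖ = ‖(w y + ∂[i] p y) - (w y - w x)‖ := by congr 1; abel
    _ ≤ A + M := norm_sub_le_of_le (hA y) hlip

end DivCurl

theorem exists_holderBound_of_div_curl_of_smooth (ι : Type u) [Fintype ι] [DecidableEq ι] {α : ℝ}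
    (hα : 0 < α) (hα' : α < 1) :
    ∃ C, 0 ≤ C ∧ ∀ (n : ℕ) {E : Type u} [NormedAddCommGroup E] [NormedSpace ℝ E] [CompleteSpace E]
      {w : ι → (ι → ℝ) → E} {p : (ι → ℝ) → E} {A : ℝ}, (∀ i, ContDiff ℝ ∞ (w i)) →
      (∀ i, UnitPeriodic (w i)) → (∀ x, ∑ k, ∂[k] (w k) x = 0) → Differentiable ℝ p →
      UnitPeriodic p → (∀ i x, ‖w i x + ∂[i] p x‖ ≤ A) →
      (∀ k i, HolderBound n α A (fun x => ∂[k] (w i) x - ∂[i] (w k) x)) →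
      ∀ i, HolderBound (n + 1) α (C * A) (w i) := by
  obtain ⟨C, hC, hschauder⟩ := exists_holderBound_fderiv_of_laplacian_eq ι hα hα'
  refine ⟨2 * (1 + C), by positivity, ?_⟩
  intro n E _ _ _ w p A hw hwper hdiv hp hpper hA hcurl i
  have hA0 : 0 ≤ A := (hcurl i i).nonneg
  have hfderiv : HolderBound n α (C * A) (fderiv ℝ (w i)) :=
    hschauder n (hw i) (hwper i)
      (fun k => (contDiff_dirDeriv (hw i) (by simp) _).sub (contDiff_dirDeriv (hw k) (by simp) _))
      (laplacian_eq_sum_dirDeriv_curl (fun k => contDiff_infty.1 (hw k) 2) hdiv i)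
      (fun k => hcurl k i)
  have hdiff := (hw i).differentiable (by simp)
  rw [mul_assoc]
  refine HolderBound.succ_of_fderiv hα.le hα'.le hdiff (fun x => ?_)
    (hfderiv.mono (by linarith))
  refine (norm_le_of_norm_add_dirDeriv_le hdiff hfderiv.bound hp hpper i (hA i) x).trans_eq ?_
  ring

theorem exists_holderBound_of_div_curl (ι : Type u) [Fintype ι] [DecidableEq ι] {α : ℝ}
    (hα : 0 < α) (hα' : α < 1) :
    ∃ C, 0 ≤ C ∧ ∀ (n : ℕ) {E : Type u} [NormedAddCommGroup E] [NormedSpace ℝ E] [CompleteSpace E]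
      {w : ι → (ι → ℝ) → E} {p : (ι → ℝ) → E} {A : ℝ}, (∀ i, ContDiff ℝ 1 (w i)) →
      (∀ i, UnitPeriodic (w i)) → (∀ x, ∑ k, ∂[k] (w k) x = 0) → ContDiff ℝ 1 p →
      UnitPeriodic p → (∀ i x, ‖w i x + ∂[i] p x‖ ≤ A) →
      (∀ k i, HolderBound n α A (fun x => ∂[k] (w i) x - ∂[i] (w k) x)) →
      ∀ i, HolderBound (n + 1) α (C * A) (w i) := by
  obtain ⟨C, hC, hsmooth⟩ := exists_holderBound_of_div_curl_of_smooth ι hα hα'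
  refine ⟨C, hC, ?_⟩
  intro n E _ _ _ w p A hw hwper hdiv hp hpper hA hcurl i
  obtain ⟨φ, hφ⟩ := exists_contDiffBump_tendsto_rOut (ι → ℝ)
  refine HolderBound.of_tendstoUniformly hα (fun N => ?_)
    (tendstoUniformly_scaledAverage_normed hφ ((hwper i).uniformContinuous (hw i)))
  set θ := (φ N).normed volume
  have hθ : ContDiff ℝ ∞ θ := (φ N).contDiff_normed
  have hsupp : HasCompactSupport θ := (φ N).hasCompactSupport_normed
  have hmass : ∫ z, |θ z| = 1 := integral_abs_normed (φ N)
  have hdw : ∀ k i, Continuous (∂[k] (w i)) := fun k i => continuous_dirDeriv (hw i) _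
  have hdirDeriv : ∀ k i, ∂[k] (scaledAverage θ 1 (w i)) = scaledAverage θ 1 (∂[k] (w i)) :=
    fun k i => dirDeriv_scaledAverage hθ.continuous hsupp 1 (hw i) _
  refine hsmooth n (w := fun i => scaledAverage θ 1 (w i)) (p := scaledAverage θ 1 p)
    (fun i => contDiff_scaledAverage_one hθ hsupp (hw i).continuous)
    (fun i => (hwper i).scaledAverage θ 1) (fun x => ?_)
    ((contDiff_scaledAverage_one hθ hsupp hp.continuous).differentiable (by simp))
    (hpper.scaledAverage θ 1) (fun i x => ?_) (fun k i => ?_) i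
  · simp only [hdirDeriv]
    rw [← scaledAverage_sum hθ.continuous hsupp 1 _ (fun k _ => hdw k k), funext hdiv]
    simp [scaledAverage]
  · have hsum := scaledAverage_add hθ.continuous hsupp 1 (hw i).continuous
      (continuous_dirDeriv hp (Pi.single i 1))
    rw [dirDeriv_scaledAverage hθ.continuous hsupp 1 hp, ← congrFun hsum x]
    simpa only [hmass, one_mul] using norm_scaledAverage_le hθ.continuous hsupp (hA i) 1 x
  · simp only [hdirDeriv]
    rw [← scaledAverage_sub hθ.continuous hsupp 1 (hdw k i) (hdw i k)]
    simpa only [hmass, one_mul] using (hcurl k i).scaledAverage hθ.continuous hsupp 1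

section CommutingDerivatives

variable {X E : Type*} [NormedAddCommGroup X] [NormedSpace ℝ X] [FiniteDimensional ℝ X]
  [MeasureSpace X] [BorelSpace X] [(volume : Measure X).IsAddHaarMeasure]
  [NormedAddCommGroup E] [NormedSpace ℝ E] {a : X → ℝ} {b : X → E}

lemma dirDeriv_scaledAverage_neg_one (ha : ContDiff ℝ 1 a) (hsupp : HasCompactSupport a)
    (hb : ContDiff ℝ 1 b) (v : X) :
    dirDeriv v (scaledAverage a (-1) b) = fun x => -scaledAverage (dirDeriv v a) (-1) b x := by
  funext x
  rw [dirDeriv_scaledAverage ha.continuous hsupp (-1) hb,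
    ← smul_scaledAverage_dirDeriv ha hsupp (-1) hb v x, neg_one_smul, neg_neg]

lemma contDiff_two_scaledAverage_neg_one (ha : ContDiff ℝ 1 a) (hsupp : HasCompactSupport a)
    (hb : ContDiff ℝ 1 b) : ContDiff ℝ 2 (scaledAverage a (-1) b) := by
  rw [show (2 : ℕ∞ω) = 1 + 1 from one_add_one_eq_two.symm, contDiff_succ_iff_fderiv]
  refine ⟨fun x => (hasFDerivAt_scaledAverage ha.continuous hsupp (-1) hb x).differentiableAt,
    by simp, contDiff_clm_apply_iff.2 fun v => ?_⟩
  have hderiv := dirDeriv_scaledAverage_neg_one ha hsupp hb v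
  unfold dirDeriv at hderiv
  rw [hderiv]
  exact (contDiff_one_scaledAverage (continuous_dirDeriv ha v) (hasCompactSupport_dirDeriv hsupp v)
    (-1) hb).neg

-- The correlation of `a` and `b` is `C²`, one derivative falling on each factor, so its second
-- derivatives commute.
lemma integral_dirDeriv_smul_dirDeriv_comm (ha : ContDiff ℝ 1 a) (hsupp : HasCompactSupport a)
    (hb : ContDiff ℝ 1 b) (v w : X) :
    ∫ x, dirDeriv v a x • dirDeriv w b x = ∫ x, dirDeriv w a x • dirDeriv v b x := by
  have hsecond : ∀ v w, dirDeriv w (dirDeriv v (scaledAverage a (-1) b)) 0 =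
      -∫ x, dirDeriv v a x • dirDeriv w b x := fun v w => by
    have hav := dirDeriv_scaledAverage (continuous_dirDeriv ha v)
      (hasCompactSupport_dirDeriv hsupp v) (-1) hb w
    rw [dirDeriv_scaledAverage_neg_one ha hsupp hb, dirDeriv, fderiv_fun_neg, neg_apply,
      ← dirDeriv, hav]
    simp [scaledAverage]
  rw [← neg_inj, ← hsecond, ← hsecond,
    dirDeriv_comm (contDiff_two_scaledAverage_neg_one ha hsupp hb)]

end CommutingDerivatives

section WeakCurl

variable {ι : Type*} [Fintype ι] [DecidableEq ι] {F G : ι → (ι → ℝ) → ℝ}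
  {Ω Ω' : ι → ι → (ι → ℝ) → ℝ} {a b : (ι → ℝ) → ℝ}

/-- The continuous field `F` has the continuous curl `Ω k i = ∂ₖ Fᵢ - ∂ᵢ Fₖ` in the sense of
distributions. -/
structure HasWeakCurl (F : ι → (ι → ℝ) → ℝ) (Ω : ι → ι → (ι → ℝ) → ℝ) : Prop where
  continuous : ∀ i, Continuous (F i)
  continuous_curl : ∀ k i, Continuous (Ω k i)
  integral_eq_zero : ∀ g : (ι → ℝ) → ℝ, ContDiff ℝ ∞ g → HasCompactSupport g → ∀ k i,
    ∫ x, (g x * Ω k i x + (∂[k] g x * F i x - ∂[i] g x * F k x)) = 0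

namespace HasWeakCurl

lemma integrable (hF : HasWeakCurl F Ω) {g : (ι → ℝ) → ℝ} (hg : ContDiff ℝ ∞ g)
    (hsupp : HasCompactSupport g) (k i : ι) :
    Integrable fun x => g x * Ω k i x + (∂[k] g x * F i x - ∂[i] g x * F k x) := by
  have hterm : ∀ k i, Integrable fun x => ∂[k] g x * F i x := fun k i =>
    ((continuous_dirDeriv (hg.of_le (by simp)) _).mul (hF.continuous i)
      ).integrable_of_hasCompactSupport (hasCompactSupport_dirDeriv hsupp _).mul_right
  exact ((hg.continuous.mul (hF.continuous_curl k i)).integrable_of_hasCompactSupport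
    hsupp.mul_right).add ((hterm k i).sub (hterm i k))

lemma zero : HasWeakCurl (fun (_ : ι) _ => 0) fun _ _ _ => 0 :=
  ⟨fun _ => continuous_const, fun _ _ => continuous_const, by simp⟩

lemma add (hF : HasWeakCurl F Ω) (hG : HasWeakCurl G Ω') :
    HasWeakCurl (fun i x => F i x + G i x) fun k i x => Ω k i x + Ω' k i x where
  continuous i := (hF.continuous i).add (hG.continuous i)
  continuous_curl k i := (hF.continuous_curl k i).add (hG.continuous_curl k i)
  integral_eq_zero g hg hsupp k i := by
    have hsum := integral_add (hF.integrable hg hsupp k i) (hG.integrable hg hsupp k i)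
    rw [hF.integral_eq_zero g hg hsupp, hG.integral_eq_zero g hg hsupp, add_zero] at hsum
    refine Eq.trans (integral_congr_ae (Eventually.of_forall fun x => ?_)) hsum
    ring

lemma sum {κ : Type*} (s : Finset κ) {F : κ → ι → (ι → ℝ) → ℝ}
    {Ω : κ → ι → ι → (ι → ℝ) → ℝ} (hF : ∀ j, HasWeakCurl (F j) (Ω j)) :
    HasWeakCurl (fun i x => ∑ j ∈ s, F j i x) fun k i x => ∑ j ∈ s, Ω j k i x := by
  classical
  induction s using Finset.induction_on with
  | empty => simpa using zero
  | insert j s hj ih => simpa only [Finset.sum_insert hj] using (hF j).add ih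

lemma unique (hF : HasWeakCurl F Ω) (hF' : HasWeakCurl F Ω') : Ω = Ω' := by
  funext k i
  have hcont := (hF.continuous_curl k i).sub (hF'.continuous_curl k i)
  have hae : (fun x => Ω k i x - Ω' k i x) =ᵐ[volume] fun _ => 0 := by
    refine ae_eq_zero_of_integral_contDiff_smul_eq_zero hcont.locallyIntegrable
      fun g hg hsupp => ?_
    have hsub := integral_sub (hF.integrable hg hsupp k i) (hF'.integrable hg hsupp k i)
    rw [hF.integral_eq_zero g hg hsupp, hF'.integral_eq_zero g hg hsupp, sub_zero] at hsub
    refine Eq.trans (integral_congr_ae (Eventually.of_forall fun x => ?_)) hsub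
    simp only [smul_eq_mul]
    ring
  exact funext fun x => sub_eq_zero.1 <|
    congrFun ((Continuous.ae_eq_iff_eq volume hcont continuous_const).1 hae) x

end HasWeakCurl

lemma hasWeakCurl_of_contDiff (hF : ∀ i, ContDiff ℝ 1 (F i)) :
    HasWeakCurl F fun k i x => ∂[k] (F i) x - ∂[i] (F k) x where
  continuous i := (hF i).continuous
  continuous_curl k i := (continuous_dirDeriv (hF i) _).sub (continuous_dirDeriv (hF k) _)
  integral_eq_zero g hg hsupp k i := by
    have hg : ContDiff ℝ 1 g := hg.of_le (by simp)
    have hgF : ∀ i, ContDiff ℝ 1 fun x => g x * F i x := fun i => hg.mul (hF i)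
    have hsuppF : ∀ i, HasCompactSupport fun x => g x * F i x := fun i => hsupp.mul_right
    have hint : ∀ k i, Integrable (∂[k] fun x => g x * F i x) := fun k i =>
      (continuous_dirDeriv (hgF i) _).integrable_of_hasCompactSupport
        (hasCompactSupport_dirDeriv (hsuppF i) _)
    have hsub := integral_sub (hint k i) (hint i k)
    rw [integral_dirDeriv_eq_zero (hgF i) (hsuppF i), integral_dirDeriv_eq_zero (hgF k) (hsuppF k),
      sub_zero] at hsub
    refine Eq.trans (integral_congr_ae (Eventually.of_forall fun x => ?_)) hsub
    simp only [dirDeriv_mul (hg.differentiable (by simp)) ((hF _).differentiable (by simp))]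
    ring

lemma hasWeakCurl_mul_dirDeriv (ha : ContDiff ℝ 1 a) (hb : ContDiff ℝ 1 b) :
    HasWeakCurl (fun i x => a x * ∂[i] b x)
      fun k i x => ∂[k] a x * ∂[i] b x - ∂[i] a x * ∂[k] b x where
  continuous i := ha.continuous.mul (continuous_dirDeriv hb _)
  continuous_curl k i :=
    ((continuous_dirDeriv ha _).mul (continuous_dirDeriv hb _)).sub
      ((continuous_dirDeriv ha _).mul (continuous_dirDeriv hb _))
  integral_eq_zero g hg hsupp k i := by
    have hg : ContDiff ℝ 1 g := hg.of_le (by simp)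
    have hga : ContDiff ℝ 1 fun x => g x * a x := hg.mul ha
    have hsuppa : HasCompactSupport fun x => g x * a x := hsupp.mul_right
    have hint : ∀ k i, Integrable fun x => ∂[k] (fun y => g y * a y) x • ∂[i] b x := fun k i =>
      ((continuous_dirDeriv hga _).smul (continuous_dirDeriv hb _)).integrable_of_hasCompactSupport
        (hasCompactSupport_dirDeriv hsuppa _).smul_right
    have hsub := integral_sub (hint k i) (hint i k)
    rw [integral_dirDeriv_smul_dirDeriv_comm hga hsuppa hb (Pi.single k 1), sub_self] at hsub
    refine Eq.trans (integral_congr_ae (Eventually.of_forall fun x => ?_)) hsub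
    simp only [dirDeriv_mul (hg.differentiable (by simp)) (ha.differentiable (by simp)),
      smul_eq_mul]
    ring

lemma hasWeakCurl_dirDeriv (hb : ContDiff ℝ 1 b) :
    HasWeakCurl (fun i x => ∂[i] b x) fun _ _ _ => 0 := by
  simpa [dirDeriv] using hasWeakCurl_mul_dirDeriv (contDiff_const (c := (1 : ℝ))) hb

lemma HasWeakCurl.eq_of_add_dirDeriv {w : ι → (ι → ℝ) → ℝ} (hF : HasWeakCurl F Ω)
    (hw : ∀ i, ContDiff ℝ 1 (w i)) (hb : ContDiff ℝ 1 b)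
    (hdecomp : ∀ i x, F i x = w i x + ∂[i] b x) :
    Ω = fun k i x => ∂[k] (w i) x - ∂[i] (w k) x := by
  obtain rfl : F = fun i x => w i x + ∂[i] b x := funext fun i => funext (hdecomp i)
  simpa only [add_zero] using
    hF.unique ((hasWeakCurl_of_contDiff hw).add (hasWeakCurl_dirDeriv hb))

lemma contDiff_one_of_continuous_dirDeriv {E : Type*} [NormedAddCommGroup E] [NormedSpace ℝ E]
    {p : (ι → ℝ) → E} (hp : Differentiable ℝ p) (hp' : ∀ i, Continuous (∂[i] p)) :
    ContDiff ℝ 1 p := by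
  refine contDiff_one_iff_fderiv.2 ⟨hp, continuous_clm_apply.2 fun v => ?_⟩
  have hexpand : (fun x => fderiv ℝ p x v) = fun x => ∑ i, v i • ∂[i] p x :=
    funext fun x => clm_pi_apply_eq_sum _ v
  rw [hexpand]
  exact continuous_finsetSum _ fun i _ => (hp' i).const_smul (v i)

end WeakCurl

lemma HolderBound.of_norm_iteratedFDeriv_le {X E : Type*} [NormedAddCommGroup X] [NormedSpace ℝ X]
    [NormedAddCommGroup E] [NormedSpace ℝ E] {n : ℕ} {α K : ℝ} {f : X → E} (hα : 0 ≤ α)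
    (hα' : α ≤ 1) (hf : ContDiff ℝ n f) (hbound : ∀ i ≤ n, ∀ x, ‖iteratedFDeriv ℝ i f x‖ ≤ K)
    (hholder : ∀ x y,
      ‖iteratedFDeriv ℝ n f x - iteratedFDeriv ℝ n f y‖ ≤ K * ‖x - y‖ ^ α) :
    HolderBound n α (2 * K) f := by
  have hK : K ≤ 2 * K := by linarith [(norm_nonneg _).trans (hbound 0 (Nat.zero_le n) 0)]
  refine ⟨hf, fun i hi x => (hbound i hi x).trans hK, fun i hi x y => ?_⟩
  obtain rfl | hlt := hi.eq_or_lt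
  · exact (hholder x y).trans (by gcongr)
  · refine norm_sub_le_rpow_of_lipschitz hα hα' (hbound i hi) (fun x y => ?_) x y
    refine Convex.norm_image_sub_le_of_norm_fderiv_le (𝕜 := ℝ) (f := iteratedFDeriv ℝ i f)
      (fun z _ => hf.differentiable_iteratedFDeriv (by exact_mod_cast hlt) z) (fun z _ => ?_)
      convex_univ (mem_univ y) (mem_univ x)
    rw [norm_fderiv_iteratedFDeriv]
    exact hbound (i + 1) hlt z

lemma UnitPeriodic.iteratedFDeriv {ι E : Type*} [Fintype ι] [NormedAddCommGroup E]
    [NormedSpace ℝ E] {f : (ι → ℝ) → E} (hf : UnitPeriodic f) (i : ℕ) :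
    UnitPeriodic (iteratedFDeriv ℝ i f) := fun x k => by
  rw [← iteratedFDeriv_comp_add_right, funext fun y => hf y k]

section HolderNorm

variable {E : Type*} [NormedAddCommGroup E] {n : ℕ} {α K : ℝ} {f g : V3 → E}

lemma supN_nonneg (f : V3 → E) : 0 ≤ supN f :=
  Real.sSup_nonneg (by rintro _ ⟨x, rfl⟩; exact norm_nonneg _)

lemma hSemi_nonneg (α : ℝ) (f : V3 → E) : 0 ≤ hSemi α f :=
  Real.sSup_nonneg (by rintro _ ⟨x, y, _, rfl⟩; positivity)

lemma norm_le_supN (hbound : ∀ x, ‖f x‖ ≤ K) (x : V3) : ‖f x‖ ≤ supN f :=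
  le_csSup ⟨K, by rintro _ ⟨y, rfl⟩; exact hbound y⟩ ⟨x, rfl⟩

lemma rpow_norm_sub_pos {x y : V3} (hxy : x ≠ y) (α : ℝ) : 0 < ‖x - y‖ ^ α :=
  Real.rpow_pos_of_pos (norm_sub_pos_iff.2 hxy) α

lemma norm_sub_le_hSemi_mul (hα : α ≠ 0) (hholder : ∀ x y, ‖f x - f y‖ ≤ K * ‖x - y‖ ^ α)
    (x y : V3) : ‖f x - f y‖ ≤ hSemi α f * ‖x - y‖ ^ α := by
  obtain rfl | hxy := eq_or_ne x y
  · simp [Real.zero_rpow hα]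
  · refine (div_le_iff₀ (rpow_norm_sub_pos hxy α)).1 (le_csSup ⟨K, ?_⟩ ⟨x, y, hxy, rfl⟩)
    rintro _ ⟨a, b, hab, rfl⟩
    exact (div_le_iff₀ (rpow_norm_sub_pos hab α)).2 (hholder a b)

variable [NormedSpace ℝ E]

lemma holNorm_nonneg (n : ℕ) (α : ℝ) (f : V3 → E) : 0 ≤ holNorm n α f :=
  add_nonneg (Finset.sum_nonneg fun _ _ => supN_nonneg _) (hSemi_nonneg _ _)

lemma MemHol.holderBound (hα : 0 < α) (hα' : α ≤ 1) (hf : MemHol n α f) (hper : UnitPeriodic f) :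
    HolderBound n α (2 * holNorm n α f) f := by
  obtain ⟨hcd, K, hK⟩ := hf
  refine .of_norm_iteratedFDeriv_le hα.le hα' hcd (fun i hi x => ?_) fun x y => ?_
  · obtain ⟨M, hM⟩ := (hper.iteratedFDeriv i).exists_norm_le
      (hcd.continuous_iteratedFDeriv (by exact_mod_cast hi))
    calc ‖iteratedFDeriv ℝ i f x‖ ≤ supN (iteratedFDeriv ℝ i f) := norm_le_supN hM x
      _ ≤ cNorm n f := Finset.single_le_sum (f := fun m => supN (iteratedFDeriv ℝ m f))
          (fun _ _ => supN_nonneg _) (Finset.mem_range_succ_iff.2 hi)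
      _ ≤ holNorm n α f := le_add_of_nonneg_right (hSemi_nonneg _ _)
  · refine (norm_sub_le_hSemi_mul hα.ne' hK x y).trans ?_
    gcongr
    exact le_add_of_nonneg_left (Finset.sum_nonneg fun _ _ => supN_nonneg _)

lemma MemHol.fderiv (hf : MemHol (n + 1) α f) : MemHol n α (fderiv ℝ f) := by
  obtain ⟨hcd, K, hK⟩ := hf
  have hcd : ContDiff ℝ ((n : ℕ∞ω) + 1) f := by exact_mod_cast hcd
  exact ⟨hcd.fderiv_right le_rfl, K, fun x y => by
    rw [← norm_iteratedFDeriv_succ_sub]; exact hK x y⟩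

lemma HolderBound.memHol (hf : HolderBound n α K f) : MemHol n α f :=
  ⟨hf.contDiff, K, hf.norm_sub_le n le_rfl⟩

lemma HolderBound.holNorm_le (hf : HolderBound n α K f) : holNorm n α f ≤ (n + 2) * K := by
  have hsup : cNorm n f ≤ ∑ _m ∈ Finset.range (n + 1), K := by
    refine Finset.sum_le_sum fun i hi => Real.sSup_le ?_ hf.nonneg
    rintro _ ⟨x, rfl⟩
    exact hf.norm_le i (Finset.mem_range_succ_iff.1 hi) x
  have hsemi : hSemi α (iteratedFDeriv ℝ n f) ≤ K := by
    refine Real.sSup_le ?_ hf.nonneg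
    rintro _ ⟨x, y, hxy, rfl⟩
    exact (div_le_iff₀ (rpow_norm_sub_pos hxy α)).2 (hf.norm_sub_le n le_rfl x y)
  calc holNorm n α f ≤ ∑ _m ∈ Finset.range (n + 1), K + K := add_le_add hsup hsemi
    _ = (n + 2) * K := by
      rw [Finset.sum_const, Finset.card_range, nsmul_eq_mul]
      push_cast
      ring

lemma MemHol.holderBound_sub (hα : 0 < α) (hα' : α ≤ 1) (hf : MemHol n α f) (hfper : UnitPeriodic f)
    (hg : MemHol n α g) (hgper : UnitPeriodic g) :
    HolderBound n α (2 * holNorm n α fun x => f x - g x) fun x => f x - g x :=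
  ((hf.holderBound hα hα' hfper).sub (hg.holderBound hα hα' hgper)).memHol.holderBound hα hα'
    fun x k => by rw [hfper x k, hgper x k]

end HolderNorm

section Components

lemma HolderBound.pi {X ι : Type*} [NormedAddCommGroup X] [NormedSpace ℝ X] [Fintype ι]
    {n : ℕ} {α K : ℝ} {f : X → ι → ℝ} (hf : ∀ i, HolderBound n α K fun x => f x i) :
    HolderBound n α (Fintype.card ι * K) f := by
  classical
  have hsum := HolderBound.sum Finset.univ fun i _ =>
    (hf i).clm_apply (ContinuousLinearMap.toSpanSingleton ℝ (Pi.single i 1 : ι → ℝ))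
  have hexpand : (fun x => ∑ i, f x i • (Pi.single i 1 : ι → ℝ)) = f :=
    funext fun x => (pi_eq_sum_univ' (f x)).symm
  simpa [ContinuousLinearMap.norm_toSpanSingleton, Pi.norm_single, hexpand] using hsum

lemma HolderBound.dirDeriv_component {X ι : Type*} [NormedAddCommGroup X] [NormedSpace ℝ X]
    [Fintype ι] {n : ℕ} {α K : ℝ} {f : X → ι → ℝ} (hdiff : Differentiable ℝ f)
    (hf : HolderBound n α K (fderiv ℝ f)) (v : X) (j : ι) :
    HolderBound n α (‖v‖ * K) (dirDeriv v fun x => f x j) := by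
  have hproj : ‖ContinuousLinearMap.proj (R := ℝ) (φ := fun _ : ι => ℝ) j‖ ≤ 1 :=
    ContinuousLinearMap.opNorm_le_bound _ zero_le_one fun x => by
      simpa using norm_le_pi_norm x j
  have hcomp := (hf.apply_const v).clm_apply (ContinuousLinearMap.proj (φ := fun _ : ι => ℝ) j)
  have hderiv := dirDeriv_clm_apply hdiff (ContinuousLinearMap.proj (φ := fun _ : ι => ℝ) j) v
  simp only [ContinuousLinearMap.proj_apply] at hderiv
  rw [hderiv]
  exact hcomp.mono (mul_le_of_le_one_left (mul_nonneg (norm_nonneg v) hf.nonneg) hproj)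

end Components

section LerayProjection

variable {f g w u : V3 → V3} {α : ℝ}

lemma IsLeray.sub (hf : IsLeray f w) (hg : IsLeray g u) :
    IsLeray (fun x => f x - g x) fun x => w x - u x := by
  obtain ⟨hwper, hw, hwdiv, p, hpper, hp, hfw⟩ := hf
  obtain ⟨huper, hu, hudiv, q, hqper, hq, hgu⟩ := hg
  refine ⟨fun x k => by simp only [hwper x k, huper x k], hw.sub hu, fun x => ?_,
    fun x => p x - q x,
    fun x k => by simp only [hpper x k, hqper x k], hp.sub hq, fun x => ?_⟩
  · have hdiff : ∀ {w : V3 → V3}, ContDiff ℝ 1 w → ∀ j, Differentiable ℝ fun x => w x j :=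
      fun hw j => (contDiff_pi.1 hw j).differentiable (by simp)
    have hpd : ∀ j, pd (fun y => (w y - u y) j) j x =
        pd (fun y => w y j) j x - pd (fun y => u y j) j x := fun j =>
      congrFun (dirDeriv_sub (hdiff hw j) (hdiff hu j) _) x
    simpa only [divg, hpd, Finset.sum_sub_distrib, sub_eq_zero] using
      (hwdiv x).trans (hudiv x).symm
  · funext i
    have hpd : pd (fun y => p y - q y) i x = pd p i x - pd q i x :=
      congrFun (dirDeriv_sub hp hq _) x
    simp only [hfw, hgu, gradf, Pi.sub_apply, Pi.add_apply, hpd]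
    ring

theorem IsLeray.exists_holderBound (hα : 0 < α) (hα' : α < 1) :
    ∃ C, 0 ≤ C ∧ ∀ (n : ℕ) {f w : V3 → V3} {Ω : Fin 3 → Fin 3 → V3 → ℝ} {A : ℝ}, IsLeray f w →
      HasWeakCurl (fun i x => f x i) Ω → (∀ x, ‖f x‖ ≤ A) → (∀ k i, HolderBound n α A (Ω k i)) →
      HolderBound (n + 1) α (C * A) w := by
  obtain ⟨C, hC, hdivcurl⟩ := exists_holderBound_of_div_curl (Fin 3) hα hα'
  refine ⟨3 * C, by positivity, ?_⟩
  intro n f w Ω A ⟨hwper, hw, hwdiv, p, hpper, hp, hfw⟩ hcurl hA hΩ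
  have hw' : ∀ i, ContDiff ℝ 1 fun x => w x i := contDiff_pi.1 hw
  have hdecomp : ∀ i x, f x i = w x i + ∂[i] p x := fun i x => congrFun (hfw x) i
  have hp1 : ContDiff ℝ 1 p := contDiff_one_of_continuous_dirDeriv hp fun i => by
    have hdp : ∂[i] p = fun x => f x i - w x i := funext fun x => by simp [hdecomp i x]
    exact hdp ▸ (hcurl.continuous i).sub (hw' i).continuous
  obtain rfl := hcurl.eq_of_add_dirDeriv hw' hp1 hdecomp
  have hcomp := hdivcurl n hw' (fun i x k => congrFun (hwper x k) i) hwdiv hp1 hpper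
    (fun i x => hdecomp i x ▸ (norm_le_pi_norm (f x) i).trans (hA x)) hΩ
  simpa [mul_assoc] using HolderBound.pi hcomp

end LerayProjection

section WeberField

variable {σ σ' v v' : V3 → V3} {n : ℕ} {α S K : ℝ}

/-- The curl of `(∇σ)ᵀ v`: the second derivatives of `σ` have cancelled, which is why the Weber
operator does not lose a derivative. -/
def jmTCurl (σ v : V3 → V3) (k i : Fin 3) (x : V3) : ℝ :=
  ∑ j, (∂[k] (fun y => v y j) x * ∂[i] (fun y => σ y j) x -
    ∂[i] (fun y => v y j) x * ∂[k] (fun y => σ y j) x)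

lemma hasWeakCurl_jmT (hσ : ContDiff ℝ 1 σ) (hv : ContDiff ℝ 1 v) :
    HasWeakCurl (fun i x => jmT σ v x i) (jmTCurl σ v) := by
  have hsum := HasWeakCurl.sum Finset.univ fun j =>
    hasWeakCurl_mul_dirDeriv (contDiff_pi.1 hv j) (contDiff_pi.1 hσ j)
  have hjmT : (fun i x => jmT σ v x i) = fun i x => ∑ j, v x j * ∂[i] (fun y => σ y j) x :=
    funext fun i => funext fun x => Finset.sum_congr rfl fun j _ => mul_comm _ _
  rwa [hjmT]

lemma HolderBound.dirDeriv_single (hv : Differentiable ℝ v) (hK : HolderBound n α K (fderiv ℝ v))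
    (k j : Fin 3) : HolderBound n α K (∂[k] fun y => v y j) := by
  simpa [Pi.norm_single] using hK.dirDeriv_component hv (Pi.single k 1) j

lemma HolderBound.jmTCurl (hσ : Differentiable ℝ σ) (hS : HolderBound n α S (fderiv ℝ σ))
    (hv : HolderBound (n + 1) α K v) (k i : Fin 3) :
    HolderBound n α (6 * 2 ^ (n + 1) * (S * K)) (jmTCurl σ v k i) := by
  have hdv := fun k j => HolderBound.dirDeriv_single (succ_iff.1 hv).1 hv.fderiv k j
  have hdσ := fun k j => HolderBound.dirDeriv_single hσ hS k j
  have hsum := HolderBound.sum Finset.univ fun (j : Fin 3) _ =>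
    ((hdv k j).mul (hdσ i j)).sub ((hdv i j).mul (hdσ k j))
  refine hsum.mono (le_of_eq ?_)
  rw [Finset.sum_const, Finset.card_univ, Fintype.card_fin]
  ring

lemma norm_jmT_le (hσ : Differentiable ℝ σ) (hS : HolderBound n α S (fderiv ℝ σ))
    (hK : ∀ x, ‖v x‖ ≤ K) (x : V3) : ‖jmT σ v x‖ ≤ 3 * (S * K) := by
  have hK0 : 0 ≤ K := (norm_nonneg _).trans (hK 0)
  have hS0 := hS.nonneg
  refine (pi_norm_le_iff_of_nonneg (by positivity)).2 fun i => ?_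
  calc ‖jmT σ v x i‖ ≤ ∑ _j : Fin 3, S * K := norm_sum_le_of_le _ fun j _ => by
        rw [norm_mul]
        gcongr
        exacts [(HolderBound.dirDeriv_single hσ hS i j).bound x,
          (norm_le_pi_norm (v x) j).trans (hK x)]
    _ = 3 * (S * K) := by simp

lemma weberField_sub_weberField (hσ : Differentiable ℝ σ) (hσ' : Differentiable ℝ σ') (x : V3) :
    weberField σ v x - weberField σ' v' x =
      (v x - v' x) + jmT (fun y => σ y - σ' y) v x + jmT σ' (fun y => v y - v' y) x := by
  funext i
  have hpd : ∀ j, pd (fun y => σ y j - σ' y j) i x =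
      pd (fun y => σ y j) i x - pd (fun y => σ' y j) i x := fun j =>
    congrFun (dirDeriv_sub (differentiable_pi.1 hσ j) (differentiable_pi.1 hσ' j) _) x
  simp only [weberField, jmT, Pi.add_apply, Pi.sub_apply, hpd, add_assoc,
    ← Finset.sum_add_distrib, add_sub_add_comm, ← Finset.sum_sub_distrib]
  congr 1
  exact Finset.sum_congr rfl fun j _ => by ring

end WeberField

theorem exists_holderBound_sub_of_isLeray_weberField {α : ℝ} (hα : 0 < α) (hα' : α < 1) :
    ∃ C, 0 ≤ C ∧ ∀ (n : ℕ) {l₁ l₂ v₁ v₂ w₁ w₂ : V3 → V3} {S V D E : ℝ},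
      ContDiff ℝ 1 l₁ → ContDiff ℝ 1 l₂ → ContDiff ℝ 1 v₁ → ContDiff ℝ 1 v₂ →
      HolderBound n α S (fderiv ℝ l₂) → HolderBound (n + 1) α V v₁ →
      HolderBound (n + 1) α D (fun x => l₁ x - l₂ x) →
      HolderBound (n + 1) α E (fun x => v₁ x - v₂ x) →
      IsLeray (weberField l₁ v₁) w₁ → IsLeray (weberField l₂ v₂) w₂ →
      HolderBound (n + 1) α (C * (2 * E + 6 * 2 ^ (n + 1) * (D * V + S * E)))
        (fun x => w₁ x - w₂ x) := by
  obtain ⟨C, hC, hLeray⟩ := IsLeray.exists_holderBound hα hα'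
  refine ⟨C, hC, ?_⟩
  intro n l₁ l₂ v₁ v₂ w₁ w₂ S V D E hl₁ hl₂ hv₁ hv₂ hS hV hD hE hw₁ hw₂
  have hl₁' := hl₁.differentiable one_ne_zero
  have hl₂' := hl₂.differentiable one_ne_zero
  have hv' := (hv₁.sub hv₂).differentiable one_ne_zero
  have hDV : 0 ≤ D * V := mul_nonneg hD.nonneg hV.nonneg
  have hSE : 0 ≤ S * E := mul_nonneg hS.nonneg hE.nonneg
  have hpow : (1 : ℝ) ≤ 2 ^ (n + 1) := one_le_pow₀ one_le_two
  have hcurl := ((hasWeakCurl_of_contDiff fun i => contDiff_pi.1 (hv₁.sub hv₂) i).add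
    (hasWeakCurl_jmT (hl₁.sub hl₂) hv₁)).add (hasWeakCurl_jmT hl₂ (hv₁.sub hv₂))
  have hw := hw₁.sub hw₂
  simp only [weberField_sub_weberField hl₁' hl₂'] at hw
  refine hLeray n hw hcurl (fun x => ?_) fun k i => ?_
  · calc _ ≤ E + 3 * (D * V) + 3 * (S * E) := by
          refine norm_add₃_le.trans (add_le_add (add_le_add (hE.bound x) ?_) ?_)
          exacts [norm_jmT_le (hl₁'.sub hl₂') hD.fderiv hV.bound x, norm_jmT_le hl₂' hS hE.bound x]
      _ ≤ _ := by nlinarith [hE.nonneg]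
  · have hdv := fun k i => HolderBound.dirDeriv_single hv' hE.fderiv k i
    refine ((((hdv k i).sub (hdv i k)).add (hD.fderiv.jmTCurl (hl₁'.sub hl₂') hV k i)).add
      (hS.jmTCurl hl₂' hE k i)).mono (le_of_eq ?_)
    ring

theorem weber_operator_lipschitz_general
    (l : ℕ) (hl : 1 ≤ l) (α : ℝ) (hα : α ∈ Set.Ioo (0:ℝ) 1) (L : ℝ) (hL : 0 < L) :
    ∃ C > 0, ∀ (V : ℝ) (l₁ l₂ v₁ v₂ w₁ w₂ : V3 → V3),
      MemHol l α l₁ → Per l₁ → MemHol l α l₂ → Per l₂ →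
      MemHol l α v₁ → Per v₁ → MemHol l α v₂ → Per v₂ →
      holNorm (l-1) α (jac l₂) ≤ L → holNorm l α v₁ ≤ V →
      IsLeray (weberField l₁ v₁) w₁ → IsLeray (weberField l₂ v₂) w₂ →
      holNorm l α (fun x => w₁ x - w₂ x)
        ≤ C * (V * holNorm l α (fun x => l₁ x - l₂ x)
          + holNorm l α (fun x => v₁ x - v₂ x)) := by
  obtain ⟨n, rfl⟩ : ∃ n, l = n + 1 := ⟨l - 1, by omega⟩
  obtain ⟨C, hC, hlip⟩ := exists_holderBound_sub_of_isLeray_weberField hα.1 hα.2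
  set c : ℝ := 2 ^ (n + 1)
  refine ⟨((n + 1 : ℕ) + 2) * (C * (4 + 24 * c * (1 + L))) + 1, by positivity, ?_⟩
  intro V l₁ l₂ v₁ v₂ w₁ w₂ hl₁ hl₁per hl₂ hl₂per hv₁ hv₁per hv₂ hv₂per hL₂ hV hw₁ hw₂
  set D := holNorm (n + 1) α fun x => l₁ x - l₂ x
  set E := holNorm (n + 1) α fun x => v₁ x - v₂ x
  have hC1 : ∀ {f : V3 → V3}, MemHol (n + 1) α f → ContDiff ℝ 1 f := fun hf => hf.1.of_le (by simp)
  have hD : 0 ≤ D := holNorm_nonneg _ _ _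
  have hE : 0 ≤ E := holNorm_nonneg _ _ _
  have hV0 : 0 ≤ V := (holNorm_nonneg _ _ _).trans hV
  have hS : HolderBound n α (2 * L) (fderiv ℝ l₂) :=
    (hl₂.fderiv.holderBound hα.1 hα.2.le (UnitPeriodic.fderiv hl₂per)).mono
      (mul_le_mul_of_nonneg_left hL₂ zero_le_two)
  have hv : HolderBound (n + 1) α (2 * V) v₁ :=
    (hv₁.holderBound hα.1 hα.2.le hv₁per).mono (mul_le_mul_of_nonneg_left hV zero_le_two)
  have hw := (hlip n (hC1 hl₁) (hC1 hl₂) (hC1 hv₁) (hC1 hv₂) hS hv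
    (hl₁.holderBound_sub hα.1 hα.2.le hl₁per hl₂ hl₂per)
    (hv₁.holderBound_sub hα.1 hα.2.le hv₁per hv₂ hv₂per) hw₁ hw₂).holNorm_le
  have hbound : 2 * (2 * E) + 6 * c * (2 * D * (2 * V) + 2 * L * (2 * E)) ≤
      (4 + 24 * c * (1 + L)) * (V * D + E) := by
    have : 0 ≤ (4 + 24 * c * L) * (V * D) + 24 * c * E := by positivity
    linarith
  refine hw.trans ?_
  calc _ ≤ ((n + 1 : ℕ) + 2) * (C * ((4 + 24 * c * (1 + L)) * (V * D + E))) := by gcongr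
    _ ≤ (((n + 1 : ℕ) + 2) * (C * (4 + 24 * c * (1 + L))) + 1) * (V * D + E) := by
      have : 0 ≤ V * D + E := by positivity
      linarith

end

/-- Lipschitz estimate for the operator `W(ℓ,v) = P[(I + ∇ℓ)ᵀ v]`. -/
theorem weber_operator_lipschitz
    (l : ℕ) (hl : 1 ≤ l) (α : ℝ) (hα : α ∈ Set.Ioo (0:ℝ) 1) (L : ℝ) (hL : 0 < L) :
    ∃ C > 0, ∀ (V : ℝ) (l₁ l₂ v₁ v₂ w₁ w₂ : V3 → V3),
      MemHol l α l₁ → Per l₁ → MemHol l α l₂ → Per l₂ →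
      MemHol l α v₁ → Per v₁ → MemHol l α v₂ → Per v₂ →
      holNorm (l-1) α (jac l₁) ≤ L → holNorm (l-1) α (jac l₂) ≤ L →
      holNorm l α v₁ ≤ V → holNorm l α v₂ ≤ V →
      IsLeray (weberField l₁ v₁) w₁ → IsLeray (weberField l₂ v₂) w₂ →
      holNorm l α (fun x => w₁ x - w₂ x)
        ≤ C * (V * holNorm l α (fun x => l₁ x - l₂ x)
          + holNorm l α (fun x => v₁ x - v₂ x)) := by
  obtain ⟨C, hC, hlip⟩ := weber_operator_lipschitz_general l hl α hα L hL
  exact ⟨C, hC, fun V l₁ l₂ v₁ v₂ w₁ w₂ hl₁ hp₁ hl₂ hp₂ hv₁ hq₁ hv₂ hq₂ _ hL₂ hV₁ _ hw₁ hw₂ =>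
    hlip V l₁ l₂ v₁ v₂ w₁ w₂ hl₁ hp₁ hl₂ hp₂ hv₁ hq₁ hv₂ hq₂ hL₂ hV₁ hw₁ hw₂⟩
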